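/- arXiv:2502.14540 — 14 statements merged into one kernel-verified Lean document; each statement's English description precedes it below -/
import Mathlib

section
/- Let G = (V, E) be a finite simple graph and K a positive integer. Define the temporal graph 𝒢 on vertex set V ∪ {x, y} (where x, y are two new vertices) whose temporal edges are: ({x,y}, 2); for every pair of distinct vertices u, v ∈ V ∪ {y}, the temporal edge ({u,v}, 2) if {u,v} ∈ E, and the temporal edge ({u,v}, 1) otherwise. Then G has a dominating set of size at most K if and only if there exists a set F' of at most K temporal edges (each with endpoints in V ∪ {x,y} and time label 1 or 2, not already in 𝒢) such that 𝒢 ↑ F' is strictly temporally connected. -/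
/-!
STATEMENT 1: Dominating set of size ≤ K in `G` iff the constructed temporal graph `𝒢`
(on V ∪ {x,y}) can be made strictly temporally connected by adding at most K new
temporal edges with time labels 1 or 2.
-/

namespace Stmt1

/-- Strict journeys using temporal edges of `G`, all at times `≥ t₀`,
with strictly increasing time labels (at least one temporal edge is used). -/
inductive SJourney {V : Type*} (G : Finset (Sym2 V × ℕ)) : ℕ → V → V → Prop
  | single {t₀ t : ℕ} {u v : V} (hle : t₀ ≤ t) (h : (s(u, v), t) ∈ G) : SJourney G t₀ u v
  | cons {t₀ t : ℕ} {u v w : V} (hle : t₀ ≤ t) (h : (s(u, v), t) ∈ G)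
      (htail : SJourney G (t + 1) v w) : SJourney G t₀ u w

/-- A temporal graph is strictly temporally connected if every vertex is reachable
from every other vertex by a strict journey. -/
def StrictTemporallyConnected {V : Type*} (G : Finset (Sym2 V × ℕ)) : Prop :=
  ∀ u v : V, u ≠ v → SJourney G 0 u v

/-- The vertex set `V ∪ {x, y}`: old vertices are `Sum.inl`, and the two new
vertices are `x = Sum.inr true` and `y = Sum.inr false`. -/
abbrev W (V : Type*) := V ⊕ Bool

def x {V : Type*} : W V := Sum.inr true
def y {V : Type*} : W V := Sum.inr false

theorem dominatingSet_iff_strict2TCA {V : Type*} [Fintype V] [DecidableEq V]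
    (G : SimpleGraph V) (K : ℕ) (hK : 1 ≤ K)
    (𝒢 : Finset (Sym2 (W V) × ℕ))
    -- 𝒢 consists of: ({x,y},2); for distinct u,v ∈ V, ({u,v},2) if {u,v} ∈ E and
    -- ({u,v},1) otherwise; and ({u,y},1) for u ∈ V (such pairs are never in E).
    (h𝒢 : ∀ et : Sym2 (W V) × ℕ, et ∈ 𝒢 ↔
      et = (s(x, y), 2) ∨
      (∃ u v : V, u ≠ v ∧
        ((G.Adj u v ∧ et = (s(Sum.inl u, Sum.inl v), 2)) ∨
         (¬ G.Adj u v ∧ et = (s(Sum.inl u, Sum.inl v), 1)))) ∨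
      (∃ u : V, et = (s(Sum.inl u, y), 1))) :
    (∃ D : Finset V, D.card ≤ K ∧ ∀ u : V, u ∉ D → ∃ v ∈ D, G.Adj u v) ↔
      (∃ F' : Finset (Sym2 (W V) × ℕ), F'.card ≤ K ∧
        (∀ et ∈ F', ¬ et.1.IsDiag ∧ (et.2 = 1 ∨ et.2 = 2) ∧ et ∉ 𝒢) ∧
        StrictTemporallyConnected (𝒢 ∪ F')) := by
  classical
  have m1 : ∀ (u : V) (t : ℕ), (s((x : W V), Sum.inl u), t) ∉ 𝒢 := by
    intro u t h
    rw [h𝒢] at h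
    simp [x, y] at h
  have m2 : ∀ u : V, (s((y : W V), Sum.inl u), 2) ∉ 𝒢 := by
    intro u h
    rw [h𝒢] at h
    simp [x, y] at h
  have m3 : ∀ t : ℕ, (s((x : W V), y), t) ∈ 𝒢 → t = 2 := by
    intro t h
    rw [h𝒢] at h
    simpa [x, y] using h
  have m4 : ∀ (u v : V), (s((Sum.inl u : W V), Sum.inl v), 2) ∈ 𝒢 → G.Adj u v := by
    intro u v h
    rw [h𝒢] at h
    rcases h with h | ⟨a, b, hab, ⟨h1, h2⟩ | ⟨h1, h2⟩⟩ | ⟨a, h⟩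
    · simp [x, y] at h
    · simp at h2
      rcases h2 with ⟨rfl, rfl⟩ | ⟨rfl, rfl⟩
      · exact h1
      · exact h1.symm
    · simp at h2
    · simp at h
  have m5 : ∀ et ∈ 𝒢, ¬ et.1.IsDiag ∧ (et.2 = 1 ∨ et.2 = 2) := by
    intro et h
    rw [h𝒢] at h
    rcases h with h | ⟨a, b, hab, ⟨h1, h2⟩ | ⟨h1, h2⟩⟩ | ⟨a, h⟩
    · subst h; simp [x, y]
    · subst h2; simpa using hab
    · subst h2; simpa using hab
    · subst h; simp [y]
  constructor
  · rintro ⟨D, hD, hdom⟩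
    refine ⟨D.image (fun v => (s((x : W V), Sum.inl v), 1)), Finset.card_image_le.trans hD, ?_, ?_⟩
    · intro et het
      obtain ⟨v, hv, rfl⟩ := Finset.mem_image.1 het
      exact ⟨by simp [x], Or.inl rfl, m1 v 1⟩
    · have exy : (s((x : W V), y), 2) ∈ 𝒢 := (h𝒢 _).2 (Or.inl rfl)
      have euy : ∀ u : V, (s((Sum.inl u : W V), y), 1) ∈ 𝒢 :=
        fun u => (h𝒢 _).2 (Or.inr (Or.inr ⟨u, rfl⟩))
      have eadj : ∀ u v : V, G.Adj u v → (s((Sum.inl u : W V), Sum.inl v), 2) ∈ 𝒢 :=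
        fun u v h => (h𝒢 _).2 (Or.inr (Or.inl ⟨u, v, h.ne, Or.inl ⟨h, rfl⟩⟩))
      have enadj : ∀ u v : V, u ≠ v → ¬ G.Adj u v →
          (s((Sum.inl u : W V), Sum.inl v), 1) ∈ 𝒢 :=
        fun u v h h' => (h𝒢 _).2 (Or.inr (Or.inl ⟨u, v, h, Or.inr ⟨h', rfl⟩⟩))
      intro a b hab
      rcases a with u | a <;> rcases b with v | b
      · have huv : u ≠ v := fun h => hab (by rw [h])
        by_cases h : G.Adj u v
        · exact .single (Nat.zero_le _) (Finset.mem_union_left _ (eadj u v h))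
        · exact .single (Nat.zero_le _) (Finset.mem_union_left _ (enadj u v huv h))
      · cases b
        · exact .single (Nat.zero_le _) (Finset.mem_union_left _ (euy u))
        · refine .cons (Nat.zero_le _) (Finset.mem_union_left _ (euy u))
            (.single le_rfl (Finset.mem_union_left _ ?_))
          rw [Sym2.eq_swap]
          exact exy
      · cases a
        · refine .single (Nat.zero_le _) (Finset.mem_union_left _ (?_ : (_, 1) ∈ 𝒢))
          rw [Sym2.eq_swap]
          exact euy v
        · by_cases hv : v ∈ D
          · exact .single (Nat.zero_le _)
              (Finset.mem_union_right _ (Finset.mem_image.2 ⟨v, hv, rfl⟩))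
          · obtain ⟨w, hw, hadj⟩ := hdom v hv
            exact .cons (Nat.zero_le _)
              (Finset.mem_union_right _ (Finset.mem_image.2 ⟨w, hw, rfl⟩))
              (.single le_rfl (Finset.mem_union_left _ (eadj w v hadj.symm)))
      · cases a <;> cases b
        · exact absurd rfl hab
        · refine .single (Nat.zero_le _) (Finset.mem_union_left _ (?_ : (_, 2) ∈ 𝒢))
          rw [Sym2.eq_swap]
          exact exy
        · exact .single (Nat.zero_le _) (Finset.mem_union_left _ exy)
        · exact absurd rfl hab
  · rintro ⟨F, hF, hFe, hcon⟩
    have hall : ∀ et ∈ 𝒢 ∪ F, ¬ et.1.IsDiag ∧ (et.2 = 1 ∨ et.2 = 2) := by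
      intro et h
      rcases Finset.mem_union.1 h with h | h
      · exact m5 et h
      · exact ⟨(hFe et h).1, (hFe et h).2.1⟩
    let R : V → Sym2 (W V) × ℕ → Prop := fun u e =>
      (∃ t, e = (s((x : W V), Sum.inl u), t)) ∨ e = (s((y : W V), Sum.inl u), 2) ∨
      (∃ v : V, e = (s((Sum.inl v : W V), Sum.inl u), 2) ∧
        (s((x : W V), Sum.inl v), 1) ∈ F ∧ (s((x : W V), Sum.inl u), 1) ∉ F)
    have hR : ∀ u u' e, R u e → R u' e → u = u' := by
      rintro u u' e (⟨t, rfl⟩ | rfl | ⟨v, rfl, h1, h2⟩) (⟨t', h⟩ | h | ⟨v', h, h1', h2'⟩) <;>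
        simp [x, y] at h
      · exact h.1
      · exact h
      · rcases h with ⟨_, h⟩ | ⟨h, h'⟩
        · exact h
        · subst h; exact absurd h1 h2'
    have hfin : ∃ D : Finset V, ∀ u, u ∈ D ↔ ∃ e ∈ F, R u e :=
      ⟨Finset.univ.filter (fun u => ∃ e ∈ F, R u e), by simp⟩
    obtain ⟨D, hD⟩ := hfin
    refine ⟨D, le_trans ?_ hF, ?_⟩
    · have hch : ∀ u : V, ∃ e, u ∈ D → e ∈ F ∧ R u e := by
        intro u
        by_cases hu : u ∈ D
        · obtain ⟨e, he⟩ := (hD u).1 hu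
          exact ⟨e, fun _ => he⟩
        · exact ⟨(s(x, y), 0), fun h => absurd h hu⟩
      choose f hf using hch
      refine Finset.card_le_card_of_injOn f (fun u hu => (hf u hu).1) ?_
      intro u hu u' hu' h
      exact hR u u' (f u) (hf u hu).2 (h ▸ (hf u' hu').2)
    · intro u hu
      have hxu : ∀ t, (s((x : W V), Sum.inl u), t) ∉ 𝒢 ∪ F := by
        intro t h
        rcases Finset.mem_union.1 h with h | h
        · exact m1 u t h
        · exact hu ((hD u).2 ⟨_, h, Or.inl ⟨t, rfl⟩⟩)
      have key : ∃ v, (s((x : W V), v), 1) ∈ 𝒢 ∪ F ∧ (s(v, Sum.inl u), 2) ∈ 𝒢 ∪ F := by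
        have hj := hcon x (Sum.inl u) (by simp [x])
        cases hj with
        | single hle h => exact absurd h (hxu _)
        | cons hle h ht =>
          have a1 := (hall _ h).2
          cases ht with
          | single hle' h' =>
            have a2 := (hall _ h').2
            simp only at a1 a2
            obtain rfl : _ = 1 := by
              rcases a1 with a1 | a1
              · exact a1
              · omega
            obtain rfl : _ = 2 := by
              rcases a2 with a2 | a2
              · omega
              · exact a2
            exact ⟨_, h, h'⟩
          | cons hle' h' ht' =>
            have a2 := (hall _ h').2
            cases ht' with
            | single hle'' h'' =>
              have a3 := (hall _ h'').2
              simp only at a1 a2 a3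
              omega
            | cons hle'' h'' _ =>
              have a3 := (hall _ h'').2
              simp only at a1 a2 a3
              omega
      obtain ⟨v, h1, h2⟩ := key
      rcases v with v | b
      · have h1F : (s((x : W V), Sum.inl v), 1) ∈ F :=
          (Finset.mem_union.1 h1).resolve_left (m1 v 1)
        refine ⟨v, (hD v).2 ⟨_, h1F, Or.inl ⟨1, rfl⟩⟩, ?_⟩
        rcases Finset.mem_union.1 h2 with h2 | h2
        · exact (m4 _ _ h2).symm
        · exact absurd ((hD u).2 ⟨_, h2, Or.inr (Or.inr ⟨v, rfl, h1F,
            fun h => hxu 1 (Finset.mem_union_right _ h)⟩)⟩) hu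
      · cases b
        · have h2F := (Finset.mem_union.1 h2).resolve_left (m2 u)
          exact absurd ((hD u).2 ⟨_, h2F, Or.inr (Or.inl rfl)⟩) hu
        · exact absurd rfl (hall _ h1).1

end Stmt1
end

section
/- Let G = (V, E) be a finite simple graph and K a positive integer. Define the temporal graph 𝒢 on vertex set V ∪ {x, y} (where x, y are two new vertices) whose temporal edges are: ({x,y}, 2); for every pair of distinct vertices u, v ∈ V ∪ {y}, the temporal edge ({u,v}, 2) if {u,v} ∈ E, and the temporal edge ({u,v}, 1) otherwise. Then G has a dominating set of size at most K if and only if there exists a set F' of at most K temporal edges (each with endpoints in V ∪ {x,y} and time label 1 or 2, not already in 𝒢) such that in 𝒢 ↑ F' the vertex x is a strict source, i.e., every other vertex is reachable from x by a strict journey. -/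
/-!
STATEMENT 2: Dominating set of size ≤ K in `G` iff, in the constructed temporal graph
`𝒢` (on V ∪ {x,y}), the vertex `x` can be made a strict source (every other vertex is
reachable from x by a strict journey) by adding at most K new temporal edges with time
labels 1 or 2.
-/

namespace Stmt2

/-- Strict journeys using temporal edges of `G`, all at times `≥ t₀`,
with strictly increasing time labels (at least one temporal edge is used). -/
inductive SJourney {V : Type*} (G : Finset (Sym2 V × ℕ)) : ℕ → V → V → Prop
  | single {t₀ t : ℕ} {u v : V} (hle : t₀ ≤ t) (h : (s(u, v), t) ∈ G) : SJourney G t₀ u v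
  | cons {t₀ t : ℕ} {u v w : V} (hle : t₀ ≤ t) (h : (s(u, v), t) ∈ G)
      (htail : SJourney G (t + 1) v w) : SJourney G t₀ u w

/-- A temporal graph is strictly temporally connected if every vertex is reachable
from every other vertex by a strict journey. -/
def StrictTemporallyConnected {V : Type*} (G : Finset (Sym2 V × ℕ)) : Prop :=
  ∀ u v : V, u ≠ v → SJourney G 0 u v

/-- The vertex set `V ∪ {x, y}`: old vertices are `Sum.inl`, and the two new
vertices are `x = Sum.inr true` and `y = Sum.inr false`. -/
abbrev W (V : Type*) := V ⊕ Bool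

def x {V : Type*} : W V := Sum.inr true
def y {V : Type*} : W V := Sum.inr false

theorem dominatingSet_iff_strict2TSA {V : Type*} [Fintype V] [DecidableEq V]
    (G : SimpleGraph V) (K : ℕ) (hK : 1 ≤ K)
    (𝒢 : Finset (Sym2 (W V) × ℕ))
    -- 𝒢 consists of: ({x,y},2); for distinct u,v ∈ V, ({u,v},2) if {u,v} ∈ E and
    -- ({u,v},1) otherwise; and ({u,y},1) for u ∈ V (such pairs are never in E).
    (h𝒢 : ∀ et : Sym2 (W V) × ℕ, et ∈ 𝒢 ↔
      et = (s(x, y), 2) ∨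
      (∃ u v : V, u ≠ v ∧
        ((G.Adj u v ∧ et = (s(Sum.inl u, Sum.inl v), 2)) ∨
         (¬ G.Adj u v ∧ et = (s(Sum.inl u, Sum.inl v), 1)))) ∨
      (∃ u : V, et = (s(Sum.inl u, y), 1))) :
    (∃ D : Finset V, D.card ≤ K ∧ ∀ u : V, u ∉ D → ∃ v ∈ D, G.Adj u v) ↔
      (∃ F' : Finset (Sym2 (W V) × ℕ), F'.card ≤ K ∧
        (∀ et ∈ F', ¬ et.1.IsDiag ∧ (et.2 = 1 ∨ et.2 = 2) ∧ et ∉ 𝒢) ∧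
        ∀ v : W V, v ≠ x → SJourney (𝒢 ∪ F') 0 x v) := by
  classical
  constructor
  · rintro ⟨D, hD, hdom⟩
    refine ⟨D.image (fun v => (s(x, Sum.inl v), 1)), Finset.card_image_le.trans hD, ?_, ?_⟩
    · intro et het
      simp only [Finset.mem_image] at het
      obtain ⟨v, hv, rfl⟩ := het
      refine ⟨by simp [x], by simp, ?_⟩
      rw [h𝒢]
      simp [x, y]
    · rintro (v | b) hne
      · by_cases hv : v ∈ D
        · exact SJourney.single (t := 1) (by omega)
            (Finset.mem_union_right _ (Finset.mem_image_of_mem _ hv))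
        · obtain ⟨w, hw, hadj⟩ := hdom v hv
          refine SJourney.cons (t := 1) (v := Sum.inl w) (by omega)
            (Finset.mem_union_right _ (Finset.mem_image_of_mem _ hw)) ?_
          refine SJourney.single (t := 2) (by omega) (Finset.mem_union_left _ ?_)
          rw [h𝒢]
          exact Or.inr (Or.inl ⟨w, v, hadj.ne', Or.inl ⟨hadj.symm, rfl⟩⟩)
      · cases b
        · refine SJourney.single (t := 2) (by omega) (Finset.mem_union_left _ ?_)
          rw [h𝒢]
          exact Or.inl rfl
        · exact absurd rfl hne
  · rintro ⟨F, hF, hnew, hreach⟩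
    have htime : ∀ e t, (e, t) ∈ 𝒢 ∪ F → t = 1 ∨ t = 2 := by
      intro e t h
      rcases Finset.mem_union.1 h with h | h
      · rw [h𝒢] at h
        rcases h with h | ⟨u, v, -, ⟨-, h⟩ | ⟨-, h⟩⟩ | ⟨u, h⟩ <;>
          simp only [Prod.mk.injEq] at h <;> omega
      · exact (hnew _ h).2.1
    have hx2 : ∀ v : V, ∀ t, (s(x, Sum.inl v), t) ∈ 𝒢 ∪ F → (s(x, Sum.inl v), t) ∈ F := by
      intro v t h
      rcases Finset.mem_union.1 h with h | h
      · rw [h𝒢] at h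
        simp [x, y] at h
      · exact h
    have hxx : ∀ t, (s((x : W V), x), t) ∉ 𝒢 ∪ F := by
      intro t h
      rcases Finset.mem_union.1 h with h | h
      · rw [h𝒢] at h
        simp [x, y] at h
      · exact (hnew _ h).1 (by simp)
    have hlate : ∀ t₀, 3 ≤ t₀ → ∀ u v : W V, ¬ SJourney (𝒢 ∪ F) t₀ u v := by
      intro t₀ h3 u v h
      cases h with
      | single hle h => have := htime _ _ h; omega
      | cons hle h _ => have := htime _ _ h; omega
    let A : V → Prop := fun v => (s(x, Sum.inl v), 1) ∈ F
    let R : V → Sym2 (W V) × ℕ → Prop := fun v e =>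
      (A v ∧ e = (s(x, Sum.inl v), 1)) ∨
      (¬ A v ∧ ∃ w : W V, (∀ a, w = Sum.inl a → A a) ∧ e = (s(w, Sum.inl v), 2))
    have key : ∀ v : V, (A v ∨ ∀ a, A a → ¬ G.Adj v a) → ∃ e ∈ F, R v e := by
      intro v hv
      by_cases hA : A v
      · exact ⟨_, hA, Or.inl ⟨hA, rfl⟩⟩
      have hv' : ∀ a, A a → ¬ G.Adj v a := hv.resolve_left hA
      suffices h : ∃ w : W V, (∀ a, w = Sum.inl a → A a) ∧ (s(w, Sum.inl v), 2) ∈ F by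
        obtain ⟨w, h1, h2⟩ := h
        exact ⟨_, h2, Or.inr ⟨hA, w, h1, rfl⟩⟩
      have h := hreach (Sum.inl v) (by simp [x])
      cases h with
      | @single _ t _ _ hle h =>
        have hF' := hx2 _ _ h
        rcases htime _ _ h with rfl | rfl
        · exact absurd hF' hA
        · exact ⟨x, by simp [x], hF'⟩
      | @cons _ t _ w _ hle h htail =>
        rcases htime _ _ h with rfl | rfl
        · cases htail with
          | @single _ t _ _ hle' h' =>
            have ht : t = 2 := by
              have := htime _ _ h'
              omega
            subst ht
            have hw : ∀ a, w = Sum.inl a → A a := by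
              rintro a rfl
              exact hx2 _ _ h
            refine ⟨w, hw, ?_⟩
            rcases Finset.mem_union.1 h' with h' | h'
            · exfalso
              rw [h𝒢] at h'
              rcases h' with h' | ⟨a, b, hab, ⟨hadj, h'⟩ | ⟨-, h'⟩⟩ | ⟨a, h'⟩
              · simp [x, y] at h'
              · simp only [Prod.mk.injEq, Sym2.eq_iff, Sum.inl.injEq, and_true] at h'
                rcases h' with ⟨rfl, rfl⟩ | ⟨rfl, rfl⟩
                · exact hv' _ (hw _ rfl) hadj.symm
                · exact hv' _ (hw _ rfl) hadj
              · simp at h'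
              · simp at h'
            · exact h'
          | @cons _ t _ _ _ hle' h' htail' =>
            exact absurd htail' (hlate _ (by omega) _ _)
        · exact absurd htail (hlate _ (by omega) _ _)
    have hinj : ∀ v v' e, R v e → R v' e → v = v' := by
      rintro v v' e (⟨h1, rfl⟩ | ⟨h1, w, hw, rfl⟩) (⟨h2, h⟩ | ⟨h2, w', hw', h⟩)
      · simpa [x] using h
      · simp at h
      · simp at h
      · simp only [Prod.mk.injEq, Sym2.eq_iff, Sum.inl.injEq, and_true] at h
        rcases h with ⟨-, h⟩ | ⟨h, -⟩
        · exact h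
        · exact absurd (hw _ h) h2
    refine ⟨Finset.univ.filter (fun v => A v ∨ ∀ a, A a → ¬ G.Adj v a), ?_, ?_⟩
    · haveI : Nonempty (Sym2 (W V) × ℕ) := ⟨(s(x, x), 0)⟩
      choose! f hf hR using key
      refine (Finset.card_le_card_of_injOn f ?_ ?_).trans hF
      · intro v hv
        exact hf v (by simpa using hv)
      · intro v hv v' hv' he
        refine hinj v v' (f v) (hR v (by simpa using hv)) ?_
        rw [he]
        exact hR v' (by simpa using hv')
    · intro u hu
      simp only [Finset.mem_filter, Finset.mem_univ, true_and, not_or, not_forall,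
        not_not] at hu
      obtain ⟨-, a, ha, hadj⟩ := hu
      exact ⟨a, by simp [ha], hadj⟩

end Stmt2
end

section
/- Let 𝒢 be a temporal graph of lifespan T on a finite vertex set V such that every snapshot has at least one component (V nonempty), and for each time t ∈ {1, …, T} let C^t_1, …, C^t_{k_t} denote the snapshot components of 𝒢 at time t. Then 𝒢 is temporally connected (with non-strict journeys) if and only if 𝒢 satisfies property 𝒫: for every i_1 ≤ k_1 and every i_T ≤ k_T there exist indices i_2, …, i_{T−1} such that for all j < T, the components C^j_{i_j} and C^{j+1}_{i_{j+1}} have nonempty intersection. -/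
/-!
STATEMENT 3: A temporal graph of lifespan `T` (on a nonempty finite vertex set) is
temporally connected (non-strict journeys) iff it satisfies property 𝒫: for every
snapshot component at time 1 and every snapshot component at time T, there is a
sequence of snapshot components (one per time step) joining them, in which
consecutive components intersect.
-/

namespace Stmt3

/-- Non-strict journeys using temporal edges of `G`, all at times `≥ t₀`,
with nondecreasing time labels (at least one temporal edge is used). -/
inductive NSJourney {V : Type*} (G : Finset (Sym2 V × ℕ)) : ℕ → V → V → Prop
  | single {t₀ t : ℕ} {u v : V} (hle : t₀ ≤ t) (h : (s(u, v), t) ∈ G) : NSJourney G t₀ u v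
  | cons {t₀ t : ℕ} {u v w : V} (hle : t₀ ≤ t) (h : (s(u, v), t) ∈ G)
      (htail : NSJourney G t v w) : NSJourney G t₀ u w

def TemporallyConnected {V : Type*} (G : Finset (Sym2 V × ℕ)) : Prop :=
  ∀ u v : V, u ≠ v → NSJourney G 0 u v

/-- The snapshot of a temporal graph at time `t`; its connected components are the
snapshot components at time `t`. -/
def snapshot {V : Type*} (G : Finset (Sym2 V × ℕ)) (t : ℕ) : SimpleGraph V :=
  SimpleGraph.fromEdgeSet {e | (e, t) ∈ G}

/-- Property 𝒫: for every snapshot component at time 1 (the component of any `u`) and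
every snapshot component at time `T` (the component of any `v`), there is a choice of a
snapshot component at each time `j` (given by a representative `c j`), starting at the
component of `u` and ending at the component of `v`, such that consecutive components
intersect. -/
def PropertyP {V : Type*} (G : Finset (Sym2 V × ℕ)) (T : ℕ) : Prop :=
  ∀ u v : V, ∃ c : ℕ → V,
    (snapshot G 1).Reachable (c 1) u ∧
    (snapshot G T).Reachable (c T) v ∧
    ∀ j : ℕ, 1 ≤ j → j < T →
      ∃ z : V, (snapshot G j).Reachable (c j) z ∧ (snapshot G (j + 1)).Reachable (c (j + 1)) z

theorem NSJourney.anti {V : Type*} {G : Finset (Sym2 V × ℕ)} {s t : ℕ} {u v : V} (hst : s ≤ t)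
    (h : NSJourney G t u v) : NSJourney G s u v := by
  cases h with
  | single hle h => exact .single (hst.trans hle) h
  | cons hle h ht => exact .cons (hst.trans hle) h ht

theorem reach_ext {V : Type*} {G : Finset (Sym2 V × ℕ)} {t : ℕ} {u v w : V}
    (h : (snapshot G t).Reachable u v) (hw : v = w ∨ NSJourney G t v w) :
    u = w ∨ NSJourney G t u w := by
  obtain ⟨p⟩ := h
  induction p with
  | nil => exact hw
  | cons hadj p ih =>
    have he := ((SimpleGraph.fromEdgeSet_adj _).1 hadj).1
    rcases ih hw with rfl | h'
    · exact Or.inr (.single le_rfl he)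
    · exact Or.inr (.cons le_rfl he h')

theorem edge_reach {V : Type*} {G : Finset (Sym2 V × ℕ)} {t : ℕ} {u v : V}
    (h : (s(u, v), t) ∈ G) : (snapshot G t).Reachable u v := by
  by_cases huv : u = v
  · subst huv; exact .refl _
  · exact SimpleGraph.Adj.reachable ((SimpleGraph.fromEdgeSet_adj _).2 ⟨h, huv⟩)

theorem journey_pos {V : Type*} {G : Finset (Sym2 V × ℕ)} {T : ℕ}
    (hvalid : ∀ et ∈ G, ¬ et.1.IsDiag ∧ 1 ≤ et.2)
    (hle : ∀ et ∈ G, et.2 ≤ T) {t₀ : ℕ} {u v : V} (h : NSJourney G t₀ u v) :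
    ∃ p : ℕ → V, p 0 = u ∧ (∀ j < t₀, p j = u) ∧ (∀ j, T ≤ j → p j = v) ∧
      ∀ j, (snapshot G (j + 1)).Reachable (p j) (p (j + 1)) := by
  induction h with
  | @single t₀ t u v h0 h =>
    have h1 : 1 ≤ t := (hvalid _ h).2
    have h2 : t ≤ T := hle _ h
    refine ⟨fun j => if j < t then u else v, if_pos (by omega), fun j hj => if_pos (by omega),
      fun j hj => if_neg (by omega), fun j => ?_⟩
    rcases lt_trichotomy (j + 1) t with h3 | h3 | h3
    · simp only [if_pos h3, if_pos (show j < t by omega)]; exact .refl _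
    · subst h3
      simpa using edge_reach h
    · simp only [if_neg (show ¬ j + 1 < t by omega), if_neg (show ¬ j < t by omega)]
      exact .refl _
  | @cons t₀ t u v w h0 h htail ih =>
    have h1 : 1 ≤ t := (hvalid _ h).2
    have h2 : t ≤ T := hle _ h
    obtain ⟨p, -, hp, hT, hr⟩ := ih
    refine ⟨fun j => if j < t then u else p j, if_pos (by omega), fun j hj => if_pos (by omega),
      fun j hj => (if_neg (by omega)).trans (hT j hj), fun j => ?_⟩
    rcases lt_trichotomy (j + 1) t with h3 | h3 | h3
    · simp only [if_pos h3, if_pos (show j < t by omega)]; exact .refl _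
    · subst h3
      have h4 := hr j
      rw [hp j (by omega)] at h4
      simpa using (edge_reach h).trans h4
    · simp only [if_neg (show ¬ j + 1 < t by omega), if_neg (show ¬ j < t by omega)]
      exact hr j

theorem temporallyConnected_iff_propertyP {V : Type*} [Fintype V] [Nonempty V]
    (G : Finset (Sym2 V × ℕ)) (T : ℕ)
    (hvalid : ∀ et ∈ G, ¬ et.1.IsDiag ∧ 1 ≤ et.2)
    (hle : ∀ et ∈ G, et.2 ≤ T)
    (hmax : ∃ et ∈ G, et.2 = T) :
    TemporallyConnected G ↔ PropertyP G T := by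
  constructor
  · intro hc u v
    by_cases huv : u = v
    · subst huv
      exact ⟨fun _ => u, .refl _, .refl _, fun j _ _ => ⟨u, .refl _, .refl _⟩⟩
    · obtain ⟨p, h0, -, hT, hr⟩ := journey_pos hvalid hle (hc u v huv)
      refine ⟨p, ?_, ?_, fun j _ _ => ⟨p j, .refl _, (hr j).symm⟩⟩
      · have := hr 0
        rw [h0] at this
        exact this.symm
      · rw [hT T le_rfl]
  · intro hP u v huv
    obtain ⟨c, h1, hT, hz⟩ := hP u v
    have hT1 : 1 ≤ T := by
      obtain ⟨et, he, rfl⟩ := hmax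
      exact (hvalid _ he).2
    have key : ∀ d j, 1 ≤ j → j + d = T → (c j = v ∨ NSJourney G j (c j) v) := by
      intro d
      induction d with
      | zero =>
        intro j _ hj
        obtain rfl : j = T := by omega
        exact reach_ext hT (Or.inl rfl)
      | succ d ih =>
        intro j h1j hj
        obtain ⟨z, hz1, hz2⟩ := hz j h1j (by omega)
        have h3 := reach_ext hz2.symm (ih (j + 1) (by omega) (by omega))
        exact reach_ext hz1 (h3.imp id (NSJourney.anti (Nat.le_succ j)))
    rcases reach_ext h1.symm (key (T - 1) 1 le_rfl (by omega)) with h | h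
    · exact absurd h huv
    · exact h.anti (Nat.zero_le _)

end Stmt3
end

section
/- Let 𝒢 be a temporal graph of lifespan 2 on a nonempty finite vertex set V, with snapshot components C^1_1, …, C^1_{k_1} at time 1 and C^2_1, …, C^2_{k_2} at time 2. Then 𝒢 is temporally connected (with non-strict journeys) if and only if for every i_1 ≤ k_1 and every i_2 ≤ k_2, the intersection C^1_{i_1} ∩ C^2_{i_2} is nonempty. -/
/-!
STATEMENT 4: A temporal graph of lifespan 2 (on a nonempty finite vertex set) is
temporally connected (non-strict journeys) iff every snapshot component at time 1
intersects every snapshot component at time 2.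
-/

namespace Stmt4

/-- Non-strict journeys using temporal edges of `G`, all at times `≥ t₀`,
with nondecreasing time labels (at least one temporal edge is used). -/
inductive NSJourney {V : Type*} (G : Finset (Sym2 V × ℕ)) : ℕ → V → V → Prop
  | single {t₀ t : ℕ} {u v : V} (hle : t₀ ≤ t) (h : (s(u, v), t) ∈ G) : NSJourney G t₀ u v
  | cons {t₀ t : ℕ} {u v w : V} (hle : t₀ ≤ t) (h : (s(u, v), t) ∈ G)
      (htail : NSJourney G t v w) : NSJourney G t₀ u w

def TemporallyConnected {V : Type*} (G : Finset (Sym2 V × ℕ)) : Prop :=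
  ∀ u v : V, u ≠ v → NSJourney G 0 u v

/-- The snapshot of a temporal graph at time `t`; its connected components are the
snapshot components at time `t`. -/
def snapshot {V : Type*} (G : Finset (Sym2 V × ℕ)) (t : ℕ) : SimpleGraph V :=
  SimpleGraph.fromEdgeSet {e | (e, t) ∈ G}

theorem NSJourney.mono' {V : Type*} {G : Finset (Sym2 V × ℕ)} {s t : ℕ} {u v : V}
    (hst : s ≤ t) (h : NSJourney G t u v) : NSJourney G s u v := by
  cases h with
  | single hle h => exact .single (hst.trans hle) h
  | cons hle h ht => exact .cons (hst.trans hle) h ht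

theorem reach_append {V : Type*} {G : Finset (Sym2 V × ℕ)} {t : ℕ} {u z v : V}
    (h : (snapshot G t).Reachable u z) (hz : z = v ∨ NSJourney G t z v) :
    u = v ∨ NSJourney G t u v := by
  obtain ⟨p⟩ := h
  induction p with
  | nil => exact hz
  | cons ha p ih =>
    have hm := ((SimpleGraph.fromEdgeSet_adj _).1 ha).1
    right
    rcases ih hz with h | h
    · subst h
      exact .single le_rfl hm
    · exact .cons le_rfl hm h

theorem journey_split {V : Type*} {G : Finset (Sym2 V × ℕ)}
    (hvalid : ∀ et ∈ G, ¬ et.1.IsDiag ∧ (et.2 = 1 ∨ et.2 = 2)) {t : ℕ} {u v : V}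
    (h : NSJourney G t u v) :
    (2 ≤ t → (snapshot G 2).Reachable u v) ∧
      ∃ z : V, (snapshot G 1).Reachable u z ∧ (snapshot G 2).Reachable v z := by
  have key : ∀ {t : ℕ} {u v : V}, (s(u, v), t) ∈ G → (snapshot G t).Reachable u v := by
    intro t u v h
    apply SimpleGraph.Adj.reachable
    refine (SimpleGraph.fromEdgeSet_adj _).2 ⟨h, ?_⟩
    have := (hvalid _ h).1
    simpa using this
  induction h with
  | @single t₀ t u v hle h =>
    have hr := key h
    rcases (hvalid _ h).2 with h1 | h1 <;> simp only at h1 <;> subst h1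
    · exact ⟨fun _ => by omega, v, hr, .refl _⟩
    · exact ⟨fun _ => hr, u, .refl _, hr.symm⟩
  | @cons t₀ t u v w hle h ht ih =>
    have hr := key h
    rcases (hvalid _ h).2 with h1 | h1 <;> simp only at h1 <;> subst h1
    · obtain ⟨z, hz1, hz2⟩ := ih.2
      exact ⟨fun _ => by omega, z, hr.trans hz1, hz2⟩
    · have := hr.trans (ih.1 le_rfl)
      exact ⟨fun _ => this, u, .refl _, this.symm⟩

theorem temporallyConnected_iff_components_intersect {V : Type*} [Fintype V] [Nonempty V]
    (G : Finset (Sym2 V × ℕ))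
    (hvalid : ∀ et ∈ G, ¬ et.1.IsDiag ∧ (et.2 = 1 ∨ et.2 = 2))
    (hmax : ∃ et ∈ G, et.2 = 2) :
    TemporallyConnected G ↔
      ∀ u v : V, ∃ z : V, (snapshot G 1).Reachable u z ∧ (snapshot G 2).Reachable v z := by
  constructor
  · intro hc u v
    by_cases huv : u = v
    · exact ⟨u, .refl _, huv ▸ .refl _⟩
    · exact (journey_split hvalid (hc u v huv)).2
  · intro h u v huv
    obtain ⟨z, h1, h2⟩ := h u v
    have h3 := reach_append h2.symm (Or.inl rfl)
    have h4 := reach_append h1 (h3.imp_right (NSJourney.mono' (by norm_num)))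
    exact (h4.resolve_left huv).mono' (by norm_num)

end Stmt4
end

section
/- Let B be a k_1 × k_2 binary matrix in which every row contains at least one 1 and every column contains at least one 1. Then there exists a simple temporal graph 𝒢 of lifespan 2 whose component-intersection matrix is B; concretely, the temporal graph with one vertex v_{i,j} for each pair (i,j) with B[i,j] = 1, with all temporal edges ({v_{i,j}, v_{i,j'}}, 1) for j ≠ j' and all temporal edges ({v_{i,j}, v_{i',j}}, 2) for i ≠ i', has snapshot components at time 1 in bijection with the rows of B, snapshot components at time 2 in bijection with the columns of B, and the component of row i intersects the component of column j if and only if B[i,j] = 1. -/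
/-!
STATEMENT 5: For every binary matrix `B` with a 1 in every row and every column, the
temporal graph with one vertex `v_{i,j}` per entry `B i j = 1`, with all edges
`{v_{i,j}, v_{i,j'}}` at time 1 (same row) and all edges `{v_{i,j}, v_{i',j}}` at time 2
(same column), is simple, has all labels in {1,2}, its snapshot components at time 1
are exactly the rows (two vertices are in the same component iff they have the same row
index, and every row index is realized), its snapshot components at time 2 are exactly
the columns, and the component of row `i` intersects the component of column `j` iff
`B i j = 1`.
-/

namespace Stmt5

/-- The snapshot of a temporal graph at time `t`; its connected components are the
snapshot components at time `t`. -/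
def snapshot {V : Type*} (G : Finset (Sym2 V × ℕ)) (t : ℕ) : SimpleGraph V :=
  SimpleGraph.fromEdgeSet {e | (e, t) ∈ G}

theorem reach_iff {V α : Type*} (G : SimpleGraph V) (f : V → α)
    (h : ∀ v w, G.Adj v w ↔ f v = f w ∧ v ≠ w) (v w : V) :
    G.Reachable v w ↔ f v = f w := by
  constructor
  · rintro ⟨p⟩
    induction p with
    | nil => rfl
    | cons a _ ih => exact ((h _ _).1 a).1.trans ih
  · intro e
    by_cases hv : v = w
    · subst hv; exact SimpleGraph.Reachable.refl _
    · exact SimpleGraph.Adj.reachable ((h _ _).2 ⟨e, hv⟩)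

theorem matrix_realizable_as_component_intersection {k₁ k₂ : ℕ}
    (B : Fin k₁ → Fin k₂ → Bool)
    (hrow : ∀ i : Fin k₁, ∃ j : Fin k₂, B i j = true)
    (hcol : ∀ j : Fin k₂, ∃ i : Fin k₁, B i j = true)
    (𝒢 : Finset (Sym2 {p : Fin k₁ × Fin k₂ // B p.1 p.2 = true} × ℕ))
    (h𝒢 : ∀ et : Sym2 {p : Fin k₁ × Fin k₂ // B p.1 p.2 = true} × ℕ, et ∈ 𝒢 ↔
      (∃ v w : {p : Fin k₁ × Fin k₂ // B p.1 p.2 = true},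
        v.1.1 = w.1.1 ∧ v.1.2 ≠ w.1.2 ∧ et = (s(v, w), 1)) ∨
      (∃ v w : {p : Fin k₁ × Fin k₂ // B p.1 p.2 = true},
        v.1.2 = w.1.2 ∧ v.1.1 ≠ w.1.1 ∧ et = (s(v, w), 2))) :
    -- 𝒢 is simple
    (∀ (e : Sym2 {p : Fin k₁ × Fin k₂ // B p.1 p.2 = true}) (t t' : ℕ),
      (e, t) ∈ 𝒢 → (e, t') ∈ 𝒢 → t = t') ∧
    -- all time labels are 1 or 2 (lifespan at most 2)
    (∀ et ∈ 𝒢, et.2 = 1 ∨ et.2 = 2) ∧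
    -- snapshot components at time 1 are in bijection with the rows of B
    (∀ v w : {p : Fin k₁ × Fin k₂ // B p.1 p.2 = true},
      (snapshot 𝒢 1).Reachable v w ↔ v.1.1 = w.1.1) ∧
    (∀ i : Fin k₁, ∃ v : {p : Fin k₁ × Fin k₂ // B p.1 p.2 = true}, v.1.1 = i) ∧
    -- snapshot components at time 2 are in bijection with the columns of B
    (∀ v w : {p : Fin k₁ × Fin k₂ // B p.1 p.2 = true},
      (snapshot 𝒢 2).Reachable v w ↔ v.1.2 = w.1.2) ∧
    (∀ j : Fin k₂, ∃ v : {p : Fin k₁ × Fin k₂ // B p.1 p.2 = true}, v.1.2 = j) ∧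
    -- the component of row i intersects the component of column j iff B i j = 1
    (∀ (i : Fin k₁) (j : Fin k₂) (v w : {p : Fin k₁ × Fin k₂ // B p.1 p.2 = true}),
      v.1.1 = i → w.1.2 = j →
        ((∃ z : {p : Fin k₁ × Fin k₂ // B p.1 p.2 = true},
          (snapshot 𝒢 1).Reachable v z ∧ (snapshot 𝒢 2).Reachable w z) ↔ B i j = true)) := by
  have m1 : ∀ v w, (s(v, w), 1) ∈ 𝒢 ↔ v.1.1 = w.1.1 ∧ v.1.2 ≠ w.1.2 := by
    intro v w
    rw [h𝒢]
    constructor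
    · rintro (⟨a, b, h1, h2, h3⟩ | ⟨a, b, h1, h2, h3⟩)
      · simp only [Prod.mk.injEq, Sym2.eq_iff, and_true] at h3
        rcases h3 with ⟨rfl, rfl⟩ | ⟨rfl, rfl⟩
        · exact ⟨h1, h2⟩
        · exact ⟨h1.symm, h2.symm⟩
      · simp at h3
    · rintro ⟨h1, h2⟩
      exact Or.inl ⟨v, w, h1, h2, rfl⟩
  have m2 : ∀ v w, (s(v, w), 2) ∈ 𝒢 ↔ v.1.2 = w.1.2 ∧ v.1.1 ≠ w.1.1 := by
    intro v w
    rw [h𝒢]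
    constructor
    · rintro (⟨a, b, h1, h2, h3⟩ | ⟨a, b, h1, h2, h3⟩)
      · simp at h3
      · simp only [Prod.mk.injEq, Sym2.eq_iff, and_true] at h3
        rcases h3 with ⟨rfl, rfl⟩ | ⟨rfl, rfl⟩
        · exact ⟨h1, h2⟩
        · exact ⟨h1.symm, h2.symm⟩
    · rintro ⟨h1, h2⟩
      exact Or.inr ⟨v, w, h1, h2, rfl⟩
  have lab : ∀ et ∈ 𝒢, et.2 = 1 ∨ et.2 = 2 := by
    intro et het
    rcases (h𝒢 et).1 het with ⟨_, _, _, _, rfl⟩ | ⟨_, _, _, _, rfl⟩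
    · exact Or.inl rfl
    · exact Or.inr rfl
  have r1 : ∀ v w : {p : Fin k₁ × Fin k₂ // B p.1 p.2 = true},
      (snapshot 𝒢 1).Reachable v w ↔ v.1.1 = w.1.1 := by
    refine reach_iff (snapshot 𝒢 1) (fun v => v.1.1) ?_
    intro v w
    simp only [snapshot, SimpleGraph.fromEdgeSet_adj, Set.mem_setOf_eq, m1, ne_eq, Subtype.ext_iff,
      Prod.ext_iff]
    tauto
  have r2 : ∀ v w : {p : Fin k₁ × Fin k₂ // B p.1 p.2 = true},
      (snapshot 𝒢 2).Reachable v w ↔ v.1.2 = w.1.2 := by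
    refine reach_iff (snapshot 𝒢 2) (fun v => v.1.2) ?_
    intro v w
    simp only [snapshot, SimpleGraph.fromEdgeSet_adj, Set.mem_setOf_eq, m2, ne_eq, Subtype.ext_iff,
      Prod.ext_iff]
    tauto
  refine ⟨?_, lab, r1, ?_, r2, ?_, ?_⟩
  · intro e t t' h h'
    induction e using Sym2.ind with
    | _ v w =>
      have a := lab _ h
      have b := lab _ h'
      simp only at a b
      rcases a with rfl | rfl <;> rcases b with rfl | rfl
      · rfl
      · exact absurd ((m1 v w).1 h).1 ((m2 v w).1 h').2
      · exact absurd ((m1 v w).1 h').1 ((m2 v w).1 h).2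
      · rfl
  · intro i
    obtain ⟨j, h⟩ := hrow i
    exact ⟨⟨(i, j), h⟩, rfl⟩
  · intro j
    obtain ⟨i, h⟩ := hcol j
    exact ⟨⟨(i, j), h⟩, rfl⟩
  · rintro i j v w rfl rfl
    constructor
    · rintro ⟨z, h1, h2⟩
      rw [(r1 v z).1 h1, (r2 w z).1 h2]
      exact z.2
    · intro h
      exact ⟨⟨(v.1.1, w.1.2), h⟩, (r1 _ _).2 rfl, (r2 _ _).2 rfl⟩

end Stmt5
end

section
/- Let 𝒢 be a temporal graph of lifespan 2 on a nonempty finite vertex set V and let B be its component-intersection matrix. Then for every positive integer K, there exists a set F' of at most K temporal edges (each with endpoints in V and time label 1 or 2) such that 𝒢 ↑ F' is temporally connected (with non-strict journeys) if and only if B can be transformed into the all-ones matrix by at most K OR-combinations of rows or columns. -/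
/-!
STATEMENT 6: For a temporal graph `𝒢` of lifespan 2 on a nonempty finite vertex set and
every positive integer `K`: `𝒢` can be augmented by at most `K` temporal edges (with
time labels 1 or 2) to become temporally connected iff its component-intersection
matrix can be transformed into the all-ones matrix by at most `K` OR-combinations of
rows or columns.  Rows are indexed by the snapshot components at time 1, columns by the
snapshot components at time 2, and `B[r,c] = 1` iff components `r` and `c` share a
vertex.  A sequence of OR-combinations is encoded by the induced grouping maps
`f` (on rows) and `g` (on columns): the groups are the fibres of `f` (resp. `g`) over
their ranges, the number of OR-combinations performed is
`(#rows − #row-groups) + (#cols − #col-groups)`, and the resulting matrix is all-ones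
iff every row-group/column-group pair contains an intersecting pair of components.
-/

namespace Stmt6

/-- Non-strict journeys using temporal edges of `G`, all at times `≥ t₀`,
with nondecreasing time labels (at least one temporal edge is used). -/
inductive NSJourney {V : Type*} (G : Finset (Sym2 V × ℕ)) : ℕ → V → V → Prop
  | single {t₀ t : ℕ} {u v : V} (hle : t₀ ≤ t) (h : (s(u, v), t) ∈ G) : NSJourney G t₀ u v
  | cons {t₀ t : ℕ} {u v w : V} (hle : t₀ ≤ t) (h : (s(u, v), t) ∈ G)
      (htail : NSJourney G t v w) : NSJourney G t₀ u w

def TemporallyConnected {V : Type*} (G : Finset (Sym2 V × ℕ)) : Prop :=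
  ∀ u v : V, u ≠ v → NSJourney G 0 u v

/-- The snapshot of a temporal graph at time `t`; its connected components are the
snapshot components at time `t`. -/
def snapshot {V : Type*} (G : Finset (Sym2 V × ℕ)) (t : ℕ) : SimpleGraph V :=
  SimpleGraph.fromEdgeSet {e | (e, t) ∈ G}

theorem reach_add {V : Type*} {H : SimpleGraph V} {a b x y : V}
    (h : (H ⊔ SimpleGraph.fromEdgeSet {s(a, b)}).Reachable x y) :
    H.Reachable x y ∨ ((H.Reachable x a ∨ H.Reachable x b) ∧
      (H.Reachable y a ∨ H.Reachable y b)) := by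
  obtain ⟨p⟩ := h
  induction p with
  | nil => exact Or.inl (SimpleGraph.Reachable.refl _)
  | @cons u v w hadj p ih =>
    rw [SimpleGraph.sup_adj, SimpleGraph.fromEdgeSet_adj] at hadj
    rcases hadj with hadj | ⟨hadj, hne⟩
    · have h1 := hadj.reachable
      rcases ih with ih | ⟨ih1, ih2⟩
      · exact Or.inl (h1.trans ih)
      · exact Or.inr ⟨ih1.imp h1.trans h1.trans, ih2⟩
    · have h2 : s(u, v) = s(a, b) := hadj
      rw [Sym2.eq_iff] at h2
      rcases h2 with ⟨rfl, rfl⟩ | ⟨rfl, rfl⟩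
      · refine Or.inr ⟨Or.inl (SimpleGraph.Reachable.refl _), ?_⟩
        rcases ih with ih | ⟨ih1, ih2⟩
        · exact Or.inr ih.symm
        · exact ih2
      · refine Or.inr ⟨Or.inr (SimpleGraph.Reachable.refl _), ?_⟩
        rcases ih with ih | ⟨ih1, ih2⟩
        · exact Or.inl ih.symm
        · exact ih2

theorem card_add_one {V : Type*} [Fintype V] (H : SimpleGraph V) (e : Sym2 V) :
    Nat.card H.ConnectedComponent ≤
      Nat.card (H ⊔ SimpleGraph.fromEdgeSet {e}).ConnectedComponent + 1 := by
  classical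
  induction e with
  | _ a b =>
  let H' := H ⊔ SimpleGraph.fromEdgeSet {s(a, b)}
  let φ : H.ConnectedComponent → Option H'.ConnectedComponent := fun c =>
    if c = H.connectedComponentMk a then none
    else some (c.map (SimpleGraph.Hom.ofLE (le_sup_left : H ≤ H')))
  have hφ : Function.Injective φ := by
    intro c d
    induction c using SimpleGraph.ConnectedComponent.ind with
    | _ x =>
    induction d using SimpleGraph.ConnectedComponent.ind with
    | _ y =>
    intro h
    by_cases h1 : H.connectedComponentMk x = H.connectedComponentMk a
    · by_cases h2 : H.connectedComponentMk y = H.connectedComponentMk a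
      · exact h1.trans h2.symm
      · simp [φ, h1, h2] at h
    · by_cases h2 : H.connectedComponentMk y = H.connectedComponentMk a
      · simp [φ, h1, h2] at h
      · simp only [φ, h1, h2, if_false, Option.some.injEq] at h
        have h3 : H'.Reachable x y := SimpleGraph.ConnectedComponent.exact h
        rw [SimpleGraph.ConnectedComponent.eq] at h1 h2 ⊢
        rcases reach_add h3 with h4 | ⟨h4, h5⟩
        · exact h4
        · exact (h4.resolve_left h1).trans (h5.resolve_left h2).symm
  have := Nat.card_le_card_of_injective φ hφ
  rwa [Finite.card_option] at this

theorem card_add {V : Type*} [Fintype V] [DecidableEq V] (H : SimpleGraph V)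
    (F : Finset (Sym2 V)) :
    Nat.card H.ConnectedComponent ≤
      Nat.card (H ⊔ SimpleGraph.fromEdgeSet (F : Set (Sym2 V))).ConnectedComponent
        + F.card := by
  induction F using Finset.induction_on with
  | empty => simp
  | insert e F he ih =>
    have h1 := card_add_one (H ⊔ SimpleGraph.fromEdgeSet (F : Set (Sym2 V))) e
    have h2 : H ⊔ SimpleGraph.fromEdgeSet (F : Set (Sym2 V)) ⊔ SimpleGraph.fromEdgeSet {e}
        = H ⊔ SimpleGraph.fromEdgeSet ((insert e F : Finset (Sym2 V)) : Set (Sym2 V)) := by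
      rw [sup_assoc, ← SimpleGraph.fromEdgeSet_union, Finset.coe_insert, Set.union_singleton]
    rw [h2] at h1
    rw [Finset.card_insert_of_notMem he]
    omega

theorem journey_split {V : Type*} {G : Finset (Sym2 V × ℕ)}
    (hG : ∀ et ∈ G, ¬ et.1.IsDiag ∧ (et.2 = 1 ∨ et.2 = 2)) {t : ℕ} {u v : V}
    (h : NSJourney G t u v) :
    (∃ w, (snapshot G 1).Reachable u w ∧ (snapshot G 2).Reachable w v) ∧
      (2 ≤ t → (snapshot G 2).Reachable u v) := by
  have key : ∀ {t : ℕ} {u v : V}, (s(u, v), t) ∈ G → (snapshot G t).Reachable u v := by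
    intro t u v h
    have h1 := (hG _ h).1
    rw [Sym2.mk_isDiag_iff] at h1
    apply SimpleGraph.Adj.reachable
    rw [snapshot, SimpleGraph.fromEdgeSet_adj]
    exact ⟨h, h1⟩
  induction h with
  | @single t₀ t u v hle h =>
    have h2 := key h
    rcases (hG _ h).2 with h3 | h3 <;> dsimp only at h3 <;> subst h3
    · exact ⟨⟨v, h2, SimpleGraph.Reachable.refl _⟩, fun h => by omega⟩
    · exact ⟨⟨u, SimpleGraph.Reachable.refl _, h2⟩, fun h => h2⟩
  | @cons t₀ t u v w hle h htail ih =>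
    have h2 := key h
    rcases (hG _ h).2 with h3 | h3 <;> dsimp only at h3 <;> subst h3
    · obtain ⟨⟨x, hx1, hx2⟩, -⟩ := ih
      exact ⟨⟨x, h2.trans hx1, hx2⟩, fun h => by omega⟩
    · have h4 := h2.trans (ih.2 le_rfl)
      exact ⟨⟨u, SimpleGraph.Reachable.refl _, h4⟩, fun h => h4⟩

theorem journey_mono {V : Type*} {G : Finset (Sym2 V × ℕ)} {s t : ℕ} {u v : V}
    (hst : s ≤ t) (h : NSJourney G t u v) : NSJourney G s u v := by
  cases h with
  | single hle h => exact .single (hst.trans hle) h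
  | cons hle h ht => exact .cons (hst.trans hle) h ht

theorem journey_prepend {V : Type*} {G : Finset (Sym2 V × ℕ)} {t : ℕ} {u w v : V}
    (h : (snapshot G t).Reachable u w) (hw : w = v ∨ NSJourney G t w v) :
    u = v ∨ NSJourney G t u v := by
  obtain ⟨p⟩ := h
  induction p with
  | nil => exact hw
  | cons hadj p ih =>
    rw [snapshot, SimpleGraph.fromEdgeSet_adj] at hadj
    rcases ih hw with rfl | h
    · exact Or.inr (.single le_rfl hadj.1)
    · exact Or.inr (.cons le_rfl hadj.1 h)

theorem journey_join {V : Type*} {G : Finset (Sym2 V × ℕ)} {u w v : V} (huv : u ≠ v)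
    (h1 : (snapshot G 1).Reachable u w) (h2 : (snapshot G 2).Reachable w v) :
    NSJourney G 0 u v := by
  have h3 := journey_prepend h2 (Or.inl rfl)
  have h4 := journey_prepend h1 (h3.imp_right (journey_mono (by norm_num)))
  exact journey_mono (by norm_num) (h4.resolve_left huv)

/-- The edges of `F` with label `t`. -/
def edgesAt {V : Type*} [DecidableEq V] (F : Finset (Sym2 V × ℕ)) (t : ℕ) :
    Finset (Sym2 V) := (F.filter (fun e => e.2 = t)).image Prod.fst

theorem snapshot_union {V : Type*} [DecidableEq V] (G F : Finset (Sym2 V × ℕ)) (t : ℕ) :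
    snapshot (G ∪ F) t =
      snapshot G t ⊔ SimpleGraph.fromEdgeSet (edgesAt F t : Set (Sym2 V)) := by
  rw [snapshot, snapshot, ← SimpleGraph.fromEdgeSet_union]
  congr 1
  ext e
  simp [edgesAt]

theorem edgesAt_card {V : Type*} [DecidableEq V] (F : Finset (Sym2 V × ℕ)) :
    (edgesAt F 1).card + (edgesAt F 2).card ≤ F.card := by
  have h1 : (edgesAt F 1).card ≤ (F.filter (fun e => e.2 = 1)).card := Finset.card_image_le
  have h2 : (edgesAt F 2).card ≤ (F.filter (fun e => e.2 = 2)).card := Finset.card_image_le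
  have h3 : Disjoint (F.filter (fun e => e.2 = 1)) (F.filter (fun e => e.2 = 2)) := by
    rw [Finset.disjoint_left]
    intro x hx hy
    simp only [Finset.mem_filter] at hx hy
    omega
  have h4 := Finset.card_union_of_disjoint h3
  have h5 : (F.filter (fun e => e.2 = 1)) ∪ (F.filter (fun e => e.2 = 2)) ⊆ F :=
    Finset.union_subset (Finset.filter_subset _ _) (Finset.filter_subset _ _)
  have h6 := Finset.card_le_card h5
  omega

theorem exists_grouping {V : Type*} [Fintype V] {H H' : SimpleGraph V} (hle : H ≤ H') :
    ∃ f : H.ConnectedComponent → H.ConnectedComponent,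
      Nat.card (Set.range f) = Nat.card H'.ConnectedComponent ∧
      ∀ x y, H'.Reachable x y →
        f (H.connectedComponentMk x) = f (H.connectedComponentMk y) := by
  let π : H.ConnectedComponent → H'.ConnectedComponent :=
    fun c => c.map (SimpleGraph.Hom.ofLE hle)
  have hπ : Function.Surjective π := by
    intro c
    induction c using SimpleGraph.ConnectedComponent.ind with
    | _ x => exact ⟨H.connectedComponentMk x, rfl⟩
  refine ⟨Function.surjInv hπ ∘ π, ?_, ?_⟩
  · rw [hπ.range_comp]
    exact Nat.card_range_of_injective (Function.injective_surjInv hπ)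
  · intro x y h
    have : π (H.connectedComponentMk x) = π (H.connectedComponentMk y) :=
      SimpleGraph.ConnectedComponent.sound h
    simp [this]

theorem exists_edges {V : Type*} [Fintype V] [DecidableEq V] (H : SimpleGraph V)
    (f : H.ConnectedComponent → H.ConnectedComponent) :
    ∃ E : Finset (Sym2 V), (∀ e ∈ E, ¬ e.IsDiag) ∧
      E.card ≤ Nat.card H.ConnectedComponent - Nat.card (Set.range f) ∧
      ∀ x y, f (H.connectedComponentMk x) = f (H.connectedComponentMk y) →
        (H ⊔ SimpleGraph.fromEdgeSet (E : Set (Sym2 V))).Reachable x y := by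
  classical
  haveI : Fintype H.ConnectedComponent := Fintype.ofFinite _
  let s : Set.range f → H.ConnectedComponent := fun r => r.2.choose
  have hs : ∀ r, f (s r) = r := fun r => r.2.choose_spec
  let o : H.ConnectedComponent → V := fun c => c.exists_rep.choose
  have ho : ∀ c, H.connectedComponentMk (o c) = c := fun c => c.exists_rep.choose_spec
  let m : H.ConnectedComponent → H.ConnectedComponent := fun c => s ⟨f c, c, rfl⟩
  have hsinj : Function.Injective s := by
    intro a b h
    apply Subtype.ext
    rw [← hs a, ← hs b, h]
  have hm : ∀ r, m (s r) = s r := by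
    intro r
    have : (⟨f (s r), s r, rfl⟩ : Set.range f) = r := Subtype.ext (hs r)
    simp only [m, this]
  let S : Finset H.ConnectedComponent := Finset.univ \ Finset.univ.image s
  refine ⟨(Finset.univ.filter (fun c => c ≠ m c)).image (fun c => s(o c, o (m c))), ?_, ?_, ?_⟩
  · intro e he
    simp only [Finset.mem_image, Finset.mem_filter, Finset.mem_univ, true_and] at he
    obtain ⟨c, hc, rfl⟩ := he
    rw [Sym2.mk_isDiag_iff]
    intro h
    exact hc ((ho c).symm.trans ((congrArg H.connectedComponentMk h).trans (ho (m c))))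
  · refine Finset.card_image_le.trans ?_
    have h1 : (Finset.univ.filter (fun c => c ≠ m c)) ⊆ S := by
      intro c hc
      simp only [Finset.mem_filter, Finset.mem_univ, true_and] at hc
      simp only [S, Finset.mem_sdiff, Finset.mem_univ, true_and, Finset.mem_image]
      rintro ⟨r, rfl⟩
      exact hc (hm r).symm
    refine (Finset.card_le_card h1).trans ?_
    rw [Finset.card_sdiff_of_subset (Finset.subset_univ _),
      Finset.card_image_of_injective _ hsinj, Finset.card_univ, Finset.card_univ,
      Nat.card_eq_fintype_card, Nat.card_eq_fintype_card]
  · set E := (Finset.univ.filter (fun c => c ≠ m c)).image (fun c => s(o c, o (m c))) with hE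
    have key : ∀ x, (H ⊔ SimpleGraph.fromEdgeSet (E : Set (Sym2 V))).Reachable x
        (o (m (H.connectedComponentMk x))) := by
      intro x
      have h1 : H.Reachable x (o (H.connectedComponentMk x)) :=
        SimpleGraph.ConnectedComponent.exact (ho _).symm
      refine (h1.mono le_sup_left).trans ?_
      by_cases hc : o (H.connectedComponentMk x) = o (m (H.connectedComponentMk x))
      · rw [← hc]
      · apply SimpleGraph.Adj.reachable
        rw [SimpleGraph.sup_adj, SimpleGraph.fromEdgeSet_adj]
        refine Or.inr ⟨?_, hc⟩
        rw [Finset.mem_coe, hE, Finset.mem_image]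
        refine ⟨_, ?_, rfl⟩
        simp only [Finset.mem_filter, Finset.mem_univ, true_and]
        exact fun h => hc (congrArg o h)
    intro x y h
    have h2 : m (H.connectedComponentMk x) = m (H.connectedComponentMk y) := by
      simp only [m, h]
    have h3 := key x
    rw [h2] at h3
    exact h3.trans (key y).symm

theorem tca_iff_octo {V : Type*} [Fintype V] [DecidableEq V] [Nonempty V]
    (𝒢 : Finset (Sym2 V × ℕ))
    (hvalid : ∀ et ∈ 𝒢, ¬ et.1.IsDiag ∧ (et.2 = 1 ∨ et.2 = 2))
    (hmax : ∃ et ∈ 𝒢, et.2 = 2)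
    (K : ℕ) (hK : 1 ≤ K) :
    (∃ F' : Finset (Sym2 V × ℕ), F'.card ≤ K ∧
        (∀ et ∈ F', ¬ et.1.IsDiag ∧ (et.2 = 1 ∨ et.2 = 2)) ∧
        TemporallyConnected (𝒢 ∪ F')) ↔
      (∃ (f : (snapshot 𝒢 1).ConnectedComponent → (snapshot 𝒢 1).ConnectedComponent)
         (g : (snapshot 𝒢 2).ConnectedComponent → (snapshot 𝒢 2).ConnectedComponent),
        (Nat.card (snapshot 𝒢 1).ConnectedComponent - Nat.card (Set.range f)) +
            (Nat.card (snapshot 𝒢 2).ConnectedComponent - Nat.card (Set.range g)) ≤ K ∧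
        ∀ r ∈ Set.range f, ∀ c ∈ Set.range g,
          ∃ (r' : (snapshot 𝒢 1).ConnectedComponent)
            (c' : (snapshot 𝒢 2).ConnectedComponent) (v : V),
            f r' = r ∧ g c' = c ∧
            (snapshot 𝒢 1).connectedComponentMk v = r' ∧
            (snapshot 𝒢 2).connectedComponentMk v = c') := by
  constructor
  · rintro ⟨F, hFK, hF, hTC⟩
    have hv : ∀ et ∈ 𝒢 ∪ F, ¬ et.1.IsDiag ∧ (et.2 = 1 ∨ et.2 = 2) := by
      intro et h
      rcases Finset.mem_union.1 h with h | h
      · exact hvalid et h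
      · exact hF et h
    have hle : ∀ t, snapshot 𝒢 t ≤ snapshot (𝒢 ∪ F) t := fun t => by
      rw [snapshot_union]; exact le_sup_left
    have hcard : ∀ t, Nat.card (snapshot 𝒢 t).ConnectedComponent ≤
        Nat.card (snapshot (𝒢 ∪ F) t).ConnectedComponent + (edgesAt F t).card := fun t => by
      rw [snapshot_union]; exact card_add _ _
    obtain ⟨f, hf1, hf2⟩ := exists_grouping (hle 1)
    obtain ⟨g, hg1, hg2⟩ := exists_grouping (hle 2)
    refine ⟨f, g, ?_, ?_⟩
    · have h1 := hcard 1
      have h2 := hcard 2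
      have h3 := edgesAt_card F
      omega
    · rintro _ ⟨r, rfl⟩ _ ⟨c, rfl⟩
      induction r using SimpleGraph.ConnectedComponent.ind with
      | _ x =>
      induction c using SimpleGraph.ConnectedComponent.ind with
      | _ y =>
      have : ∃ w, (snapshot (𝒢 ∪ F) 1).Reachable x w ∧
          (snapshot (𝒢 ∪ F) 2).Reachable w y := by
        by_cases hxy : x = y
        · subst hxy
          exact ⟨x, SimpleGraph.Reachable.refl _, SimpleGraph.Reachable.refl _⟩
        · exact (journey_split hv (hTC x y hxy)).1
      obtain ⟨w, hw1, hw2⟩ := this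
      exact ⟨_, _, w, (hf2 _ _ hw1).symm, hg2 _ _ hw2, rfl, rfl⟩
  · rintro ⟨f, g, hcard, hall⟩
    obtain ⟨E₁, hd1, hc1, hr1⟩ := exists_edges _ f
    obtain ⟨E₂, hd2, hc2, hr2⟩ := exists_edges _ g
    let F : Finset (Sym2 V × ℕ) :=
      E₁.image (fun e => (e, 1)) ∪ E₂.image (fun e => (e, 2))
    have hF1 : edgesAt F 1 = E₁ := by
      ext e; simp [edgesAt, F]
    have hF2 : edgesAt F 2 = E₂ := by
      ext e; simp [edgesAt, F]
    refine ⟨F, ?_, ?_, ?_⟩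
    · have h1 : F.card ≤ _ := Finset.card_union_le _ _
      have h2 : (E₁.image (fun e => (e, 1))).card ≤ E₁.card := Finset.card_image_le
      have h3 : (E₂.image (fun e => (e, 2))).card ≤ E₂.card := Finset.card_image_le
      omega
    · intro et het
      rcases Finset.mem_union.1 het with h | h
      · obtain ⟨e, he, rfl⟩ := Finset.mem_image.1 h
        exact ⟨hd1 e he, Or.inl rfl⟩
      · obtain ⟨e, he, rfl⟩ := Finset.mem_image.1 h
        exact ⟨hd2 e he, Or.inr rfl⟩
    · intro u v huv
      obtain ⟨r, c, w, h1, h2, rfl, rfl⟩ := hall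
        (f ((snapshot 𝒢 1).connectedComponentMk u)) ⟨_, rfl⟩
        (g ((snapshot 𝒢 2).connectedComponentMk v)) ⟨_, rfl⟩
      apply journey_join huv (w := w)
      · rw [snapshot_union, hF1]
        exact hr1 _ _ h1.symm
      · rw [snapshot_union, hF2]
        exact hr2 _ _ h2

end Stmt6
end

section
/- Let T = {e_1, …, e_n} be a nonempty finite set, C = {T_1, …, T_m} a collection of subsets of T, and K a positive integer. Define B as the binary matrix with n(m+1) rows and m columns where B[i,j] = 1 if and only if e_{((i−1) mod n)+1} ∈ T_j. Then C can be partitioned into at least K pairwise disjoint parts each of which is a set cover of T if and only if B can be transformed into the all-ones matrix by at most m − K OR-combinations of rows or columns. -/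
/-!
STATEMENT 7: Disjoint Set Covers reduces to OCTO.  With `T = Fin n` (nonempty),
`C = {T_1, …, T_m}` given by `Tsets : Fin m → Finset (Fin n)`, and `B` the binary
matrix with `n * (m + 1)` rows and `m` columns where `B i j = 1` iff the element
`i mod n` belongs to `T_j`:  `C` can be partitioned into at least `K` parts, each of
which is a set cover of `T`, iff `B` can be transformed into the all-ones matrix by at
most `m − K` OR-combinations of rows or columns.  A sequence of OR-combinations is
encoded by grouping maps `f` (rows) and `g` (columns) as fibres over their ranges; the
number of combinations is `(#rows − #row-groups) + (#cols − #col-groups)` and the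
result is all-ones iff every row-group/column-group pair contains a 1-entry.
-/

namespace Stmt7

theorem dsc_iff_octo {n m K : ℕ} (hn : 1 ≤ n) (hK : 1 ≤ K) (hKm : K ≤ m)
    (Tsets : Fin m → Finset (Fin n))
    (B : Fin (n * (m + 1)) → Fin m → Bool)
    (hB : ∀ (i : Fin (n * (m + 1))) (j : Fin m),
      B i j = true ↔ ∃ h : i.1 % n < n, (⟨i.1 % n, h⟩ : Fin n) ∈ Tsets j) :
    -- C can be partitioned into at least K parts, each part covering T
    (∃ (k : ℕ), K ≤ k ∧ ∃ P : Fin m → Fin k,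
        ∀ (c : Fin k) (e : Fin n), ∃ j : Fin m, P j = c ∧ e ∈ Tsets j) ↔
      -- B can be made all-ones with at most m − K OR-combinations
      (∃ (f : Fin (n * (m + 1)) → Fin (n * (m + 1))) (g : Fin m → Fin m),
        (n * (m + 1) - Nat.card (Set.range f)) + (m - Nat.card (Set.range g)) ≤ m - K ∧
        ∀ r ∈ Set.range f, ∀ c ∈ Set.range g,
          ∃ (r' : Fin (n * (m + 1))) (c' : Fin m),
            f r' = r ∧ g c' = c ∧ B r' c' = true) := by
  constructor
  · rintro ⟨k, hk, P, hP⟩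
    have hs : ∀ c : Fin k, ∃ j, P j = c := fun c => by
      obtain ⟨j, hj, _⟩ := hP c ⟨0, hn⟩
      exact ⟨j, hj⟩
    choose s hs using hs
    have hsi : Function.Injective s := fun a b h => by rw [← hs a, ← hs b, h]
    refine ⟨id, fun j => s (P j), ?_, ?_⟩
    · have h1 : Set.range (fun j => s (P j)) = Set.range s := by
        ext x
        constructor
        · rintro ⟨j, rfl⟩
          exact ⟨P j, rfl⟩
        · rintro ⟨c, rfl⟩
          exact ⟨s c, by simp only [hs]⟩
      have h2 : Nat.card (Set.range s) = k := by
        rw [Nat.card_range_of_injective hsi]; simp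
      have h3 : Nat.card (Set.range (id : Fin (n * (m + 1)) → Fin (n * (m + 1)))) = n * (m + 1) := by
        rw [Nat.card_range_of_injective Function.injective_id]; simp
      rw [h1, h2, h3]
      omega
    · rintro r - c ⟨j, rfl⟩
      obtain ⟨j', h1, h2⟩ := hP (P j) ⟨r.1 % n, Nat.mod_lt _ hn⟩
      exact ⟨r, j', rfl, by simp only [h1], (hB r j').2 ⟨Nat.mod_lt _ hn, h2⟩⟩
  · rintro ⟨f, g, hc, hall⟩
    have hg : K ≤ Nat.card (Set.range g) := by omega
    have key : ∀ e : Fin n, ∃ r ∈ Set.range f, ∀ r', f r' = r → r'.1 % n = e.1 := by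
      intro e
      by_contra hcon
      push Not at hcon
      classical
      let S : Finset (Fin (n * (m + 1))) := Finset.univ.filter (fun i => i.1 % n = e.1)
      have hS : m + 1 ≤ S.card := by
        have hlt : ∀ t : Fin (m + 1), e.1 + n * t.1 < n * (m + 1) := fun t => by
          have h1 := e.2
          have h2 : n * (t.1 + 1) ≤ n * (m + 1) := Nat.mul_le_mul_left n t.2
          rw [Nat.mul_add] at h2
          omega
        have := Finset.card_le_card_of_injOn (s := (Finset.univ : Finset (Fin (m + 1)))) (t := S)
          (fun t => ⟨e.1 + n * t.1, hlt t⟩)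
          (by
            intro t _
            simp [S, Nat.add_mul_mod_self_left, Nat.mod_eq_of_lt e.2])
          (by
            intro a _ b _ hab
            simp only [Fin.mk.injEq, Nat.add_left_cancel_iff] at hab
            exact Fin.ext (Nat.eq_of_mul_eq_mul_left hn hab))
        simpa using this
      have hsub : Finset.univ.image f ⊆ Sᶜ.image f := by
        intro x hx
        obtain ⟨y, -, rfl⟩ := Finset.mem_image.1 hx
        obtain ⟨r', h1, h2⟩ := hcon (f y) ⟨y, rfl⟩
        exact Finset.mem_image.2 ⟨r', by simpa [S] using h2, h1⟩
      have h1 := (Finset.card_le_card hsub).trans Finset.card_image_le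
      have h2 : Nat.card (Set.range f) = (Finset.univ.image f).card := by
        rw [← Set.ncard_coe_finset, Finset.coe_image, Finset.coe_univ, Set.image_univ]
        rfl
      have h3 := Finset.card_add_card_compl S
      rw [Fintype.card_fin] at h3
      omega
    refine ⟨Nat.card (Set.range g), hg, fun j => Finite.equivFin (Set.range g) ⟨g j, j, rfl⟩, ?_⟩
    intro c e
    obtain ⟨r, hr, hre⟩ := key e
    obtain ⟨r', c', h1, h2, h3⟩ := hall r hr _ ((Finite.equivFin (Set.range g)).symm c).2
    refine ⟨c', ?_, ?_⟩
    · rw [← Equiv.eq_symm_apply]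
      exact Subtype.ext h2
    · obtain ⟨h, h4⟩ := (hB r' c').1 h3
      have : (⟨r'.1 % n, h⟩ : Fin n) = e := Fin.ext (hre r' h1)
      rwa [this] at h4

end Stmt7
end

section
/- Let S = {e_1, …, e_n} be a finite set, C = {S_1, …, S_m} a collection of nonempty subsets of S with every element of S contained in some set of C, and K ≤ |S| a positive integer. Define the temporal graph 𝒢 whose vertex set consists of: a vertex x; a vertex e_iS_j for every pair (i,j) with e_i ∈ S_j; and a vertex S_j for every j ∈ {1,…,m}; and whose temporal edges are: ({e_iS_j, e_iS_{j'}}, 1) for every i and every j ≠ j' with e_i ∈ S_j and e_i ∈ S_{j'}, and ({e_iS_j, S_j}, 2) for every pair with e_i ∈ S_j. Then there exists a hitting set S' ⊆ S for C with |S'| ≤ K if and only if there exists a set F' of at most K temporal edges (each with endpoints among the vertices of 𝒢 and time label 1 or 2, not already in 𝒢) such that in 𝒢 ↑ F' every vertex is reachable from x by a non-strict journey. -/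
/-!
STATEMENT 8: Hitting Set reduces to (non-strict) Temporal Source Augmentation.  With
ground set `α` (finite), collection `Cs : Fin m → Finset α` of nonempty sets covering
`α`, and `K ≤ |α|` positive: there is a hitting set of size at most `K` iff the
constructed temporal graph (vertices: `x`, the vertices `e_iS_j` for `e_i ∈ S_j`, and
the vertices `S_j`; edges: time-1 cliques on the `e_iS_j` with the same element, and
time-2 edges `{e_iS_j, S_j}`) can be augmented by at most `K` new temporal edges (time
labels 1 or 2) so that every vertex is reachable from `x` by a non-strict journey.
-/

namespace Stmt8

/-- Non-strict journeys using temporal edges of `G`, all at times `≥ t₀`,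
with nondecreasing time labels (at least one temporal edge is used). -/
inductive NSJourney {V : Type*} (G : Finset (Sym2 V × ℕ)) : ℕ → V → V → Prop
  | single {t₀ t : ℕ} {u v : V} (hle : t₀ ≤ t) (h : (s(u, v), t) ∈ G) : NSJourney G t₀ u v
  | cons {t₀ t : ℕ} {u v w : V} (hle : t₀ ≤ t) (h : (s(u, v), t) ∈ G)
      (htail : NSJourney G t v w) : NSJourney G t₀ u w

/-- The vertex set of the constructed temporal graph: `Sum.inl ()` is the vertex `x`;
`Sum.inr (Sum.inl ⟨(a, j), _⟩)` is the vertex `e_aS_j` (for `a ∈ S_j`);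
`Sum.inr (Sum.inr j)` is the vertex `S_j`. -/
abbrev W {α : Type*} (m : ℕ) (Cs : Fin m → Finset α) :=
  Unit ⊕ ({p : α × Fin m // p.1 ∈ Cs p.2} ⊕ Fin m)

/-- The `DecidableEq` instance (found explicitly to help instance resolution). -/
instance {α : Type*} [DecidableEq α] {m : ℕ} (Cs : Fin m → Finset α) :
    DecidableEq (Sym2 (W m Cs) × ℕ) := instDecidableEqProd

inductive Arr {V : Type*} (G : Finset (Sym2 V × ℕ)) (x : V) : ℕ ×ₗ ℕ → V → Prop
  | base : Arr G x (toLex (0, 0)) x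
  | step {t t' k : ℕ} {u v : V} (hle : t ≤ t') (h : (s(u, v), t') ∈ G)
      (ha : Arr G x (toLex (t, k)) u) : Arr G x (toLex (t', k + 1)) v

theorem NSJourney.arr {V : Type*} {G : Finset (Sym2 V × ℕ)} {x : V} {t₀ : ℕ} {u v : V}
    (h : NSJourney G t₀ u v) :
    ∀ t k, t ≤ t₀ → Arr G x (toLex (t, k)) u → ∃ p, Arr G x p v := by
  induction h with
  | single hle h => exact fun t k ht ha => ⟨_, Arr.step (ht.trans hle) h ha⟩
  | cons hle h _ ih => exact fun t k ht ha => ih _ _ le_rfl (Arr.step (ht.trans hle) h ha)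

theorem exists_rank {V : Type*} (G : Finset (Sym2 V × ℕ)) (x : V)
    (H : ∀ v, v ≠ x → NSJourney G 0 x v) :
    ∃ r : V → ℕ ×ₗ ℕ, ∀ v, v ≠ x → ∃ u, (s(u, v), (ofLex (r v)).1) ∈ G ∧ r u < r v ∧
      (ofLex (r u)).1 ≤ (ofLex (r v)).1 := by
  have h1 : ∀ v, ∃ p, Arr G x p v ∧ ∀ q, Arr G x q v → p ≤ q := by
    intro v
    have hne : ∃ p, Arr G x p v := by
      by_cases hv : v = x
      · subst hv; exact ⟨_, Arr.base⟩
      · exact (H v hv).arr 0 0 le_rfl Arr.base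
    obtain ⟨p, hp, hmin⟩ := WellFounded.has_min (wellFounded_lt (α := ℕ ×ₗ ℕ))
      {p | Arr G x p v} hne
    exact ⟨p, hp, fun q hq => not_lt.1 (hmin q hq)⟩
  choose r hr hmin using h1
  refine ⟨r, fun v hv => ?_⟩
  have hh := hr v
  generalize hp : r v = p at hh
  cases hh with
  | base => exact absurd rfl hv
  | @step t t' k u _ hle h ha =>
    have h2 := hmin u _ ha
    have h3 : toLex (t, k) < toLex (t', k + 1) := by
      rw [Prod.Lex.toLex_lt_toLex]
      rcases hle.lt_or_eq with h | h
      · exact Or.inl h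
      · exact Or.inr ⟨h, Nat.lt_succ_self k⟩
    refine ⟨u, h, lt_of_le_of_lt h2 h3, ?_⟩
    have := lt_of_le_of_lt h2 h3
    rw [Prod.Lex.lt_iff] at this
    rcases this with h | h
    · exact h.le
    · exact h.1.le

theorem hittingSet_iff_tsa {α : Type*} [Fintype α] [DecidableEq α] {m : ℕ}
    (Cs : Fin m → Finset α)
    (hCne : ∀ j : Fin m, (Cs j).Nonempty)
    (hcover : ∀ a : α, ∃ j : Fin m, a ∈ Cs j)
    (K : ℕ) (hK : 1 ≤ K) (hKn : K ≤ Fintype.card α)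
    (𝒢 : Finset (Sym2 (W m Cs) × ℕ))
    (h𝒢 : ∀ et : Sym2 (W m Cs) × ℕ, et ∈ 𝒢 ↔
      -- time-1 edges between vertices of V_SC corresponding to the same element
      (∃ v w : {p : α × Fin m // p.1 ∈ Cs p.2}, v.1.1 = w.1.1 ∧ v ≠ w ∧
        et = (s((Sum.inr (Sum.inl v) : W m Cs), Sum.inr (Sum.inl w)), 1)) ∨
      -- time-2 edges between e_aS_j and S_j
      (∃ v : {p : α × Fin m // p.1 ∈ Cs p.2},
        et = (s((Sum.inr (Sum.inl v) : W m Cs), Sum.inr (Sum.inr v.1.2)), 2))) :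
    (∃ S' : Finset α, S'.card ≤ K ∧ ∀ j : Fin m, ∃ a ∈ S', a ∈ Cs j) ↔
      (∃ F' : Finset (Sym2 (W m Cs) × ℕ), F'.card ≤ K ∧
        (∀ et ∈ F', ¬ et.1.IsDiag ∧ (et.2 = 1 ∨ et.2 = 2) ∧ et ∉ 𝒢) ∧
        ∀ v : W m Cs, v ≠ Sum.inl () → NSJourney (𝒢 ∪ F') 0 (Sum.inl ()) v) := by
  constructor
  · rintro ⟨S', hc, hit⟩
    choose f hf using hcover
    let g : α → Sym2 (W m Cs) × ℕ := fun a =>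
      (s((Sum.inl () : W m Cs), Sum.inr (Sum.inl ⟨(a, f a), hf a⟩)), 1)
    refine ⟨S'.image g, Finset.card_image_le.trans hc, ?_, ?_⟩
    · intro et het
      obtain ⟨a, _, rfl⟩ := Finset.mem_image.1 het
      refine ⟨by simp [g], Or.inl rfl, ?_⟩
      rw [h𝒢]
      rintro (⟨v, w, _, _, h⟩ | ⟨v, h⟩) <;> simp [g] at h
    · have e2 : ∀ v : {p : α × Fin m // p.1 ∈ Cs p.2},
          (s((Sum.inr (Sum.inl v) : W m Cs), Sum.inr (Sum.inr v.1.2)), 2) ∈ 𝒢 ∪ S'.image g :=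
        fun v => Finset.mem_union_left _ ((h𝒢 _).2 (Or.inr ⟨v, rfl⟩))
      have key : ∀ j (w : W m Cs), (w = Sum.inr (Sum.inr j) ∨
          NSJourney (𝒢 ∪ S'.image g) 2 (Sum.inr (Sum.inr j)) w) →
          NSJourney (𝒢 ∪ S'.image g) 0 (Sum.inl ()) w := by
        intro j w hw
        obtain ⟨a, ha, haj⟩ := hit j
        have hx : g a ∈ 𝒢 ∪ S'.image g :=
          Finset.mem_union_right _ (Finset.mem_image_of_mem g ha)
        have h2 : NSJourney (𝒢 ∪ S'.image g) 1 (Sum.inr (Sum.inl ⟨(a, j), haj⟩)) w := by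
          rcases hw with rfl | hw
          · exact NSJourney.single (by norm_num) (e2 ⟨(a, j), haj⟩)
          · exact NSJourney.cons (by norm_num) (e2 ⟨(a, j), haj⟩) hw
        refine NSJourney.cons (Nat.zero_le _) hx ?_
        by_cases hj : f a = j
        · subst hj; exact h2
        · refine NSJourney.cons le_rfl (Finset.mem_union_left _ ((h𝒢 _).2 (Or.inl
            ⟨⟨(a, f a), hf a⟩, ⟨(a, j), haj⟩, rfl, ?_, rfl⟩))) h2
          intro h
          simp at h
          exact hj h
      rintro (⟨⟩ | v | j) hv
      · exact absurd rfl hv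
      · refine key v.1.2 _ (Or.inr (NSJourney.single (t := 2) le_rfl ?_))
        rw [Sym2.eq_swap]
        exact e2 v
      · exact key j _ (Or.inl rfl)
  · rintro ⟨F', hc, _, hreach⟩
    obtain ⟨r, hr⟩ := exists_rank _ _ hreach
    haveI : Nonempty α := Fintype.card_pos_iff.1 (lt_of_lt_of_le hK hKn)
    choose c hcm using hCne
    let pk : W m Cs → α := fun v => match v with
      | Sum.inl _ => Classical.arbitrary α
      | Sum.inr (Sum.inl v) => v.1.1
      | Sum.inr (Sum.inr j) => c j
    have hp : ∀ e : Sym2 (W m Cs), ∃ a, ∀ u v, e = s(u, v) → r u < r v → a = pk v := by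
      intro e
      by_cases h : ∃ u v, e = s(u, v) ∧ r u < r v
      · obtain ⟨u, v, rfl, huv⟩ := h
        refine ⟨pk v, fun u' v' he h' => ?_⟩
        rcases Sym2.eq_iff.1 he with ⟨_, rfl⟩ | ⟨rfl, rfl⟩
        · rfl
        · exact absurd huv h'.asymm
      · exact ⟨Classical.arbitrary α, fun u v h1 h2 => absurd ⟨u, v, h1, h2⟩ h⟩
    choose p hp using hp
    refine ⟨F'.image (fun e => p e.1), Finset.card_image_le.trans hc, ?_⟩
    set S' := F'.image (fun e => p e.1) with hS'
    have hF : ∀ u v t, (s(u, v), t) ∈ F' → r u < r v → pk v ∈ S' := by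
      intro u v t h1 h2
      rw [← hp _ u v rfl h2]
      exact Finset.mem_image_of_mem (fun e : Sym2 (W m Cs) × ℕ => p e.1) h1
    have main : ∀ q, ∀ v : W m Cs, r v = q →
        (∀ w, v = Sum.inr (Sum.inl w) → ((ofLex (r v)).1 ≤ 1 → w.1.1 ∈ S') ∧
          ∃ a ∈ S', a ∈ Cs w.1.2) ∧
        (∀ j, v = Sum.inr (Sum.inr j) → ∃ a ∈ S', a ∈ Cs j) := by
      intro q
      induction q using WellFoundedLT.induction with
      | ind q ih =>
      intro v hv
      subst hv
      by_cases hvx : v = Sum.inl ()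
      · subst hvx
        exact ⟨fun w h => by simp at h, fun j h => by simp at h⟩
      obtain ⟨u, he, hlt, htm⟩ := hr v hvx
      have ihu := ih _ hlt u rfl
      rcases Finset.mem_union.1 he with he | he
      · rcases (h𝒢 _).1 he with ⟨y, z, hyz, -, h⟩ | ⟨y, h⟩
        · obtain ⟨h, ht⟩ := Prod.mk.inj h
          rw [ht] at htm ⊢
          rcases Sym2.eq_iff.1 h with ⟨rfl, rfl⟩ | ⟨rfl, rfl⟩
          · have hy := (ihu.1 y rfl).1 htm
            refine ⟨fun w h => ?_, fun j h => by simp at h⟩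
            obtain rfl : z = w := by simpa using h
            rw [hyz] at hy
            exact ⟨fun _ => hy, _, hy, z.2⟩
          · have hy := (ihu.1 z rfl).1 htm
            refine ⟨fun w h => ?_, fun j h => by simp at h⟩
            obtain rfl : y = w := by simpa using h
            rw [← hyz] at hy
            exact ⟨fun _ => hy, _, hy, y.2⟩
        · obtain ⟨h, ht⟩ := Prod.mk.inj h
          rw [ht]
          rcases Sym2.eq_iff.1 h with ⟨rfl, rfl⟩ | ⟨rfl, rfl⟩
          · refine ⟨fun w h => by simp at h, fun j h => ?_⟩
            obtain rfl : y.1.2 = j := by simpa using h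
            exact (ihu.1 y rfl).2
          · refine ⟨fun w h => ?_, fun j h => by simp at h⟩
            obtain rfl : y = w := by simpa using h
            exact ⟨fun h => by omega, ihu.2 _ rfl⟩
      · have hpv := hF u v _ he hlt
        refine ⟨?_, ?_⟩
        · rintro w rfl
          exact ⟨fun _ => hpv, _, hpv, w.2⟩
        · rintro j rfl
          exact ⟨_, hpv, hcm j⟩
    exact fun j => (main _ (Sum.inr (Sum.inr j)) rfl).2 j rfl

end Stmt8
end

section
/- Let 𝒢 be a temporally connected (non-strict) temporal graph of lifespan 2 on a nonempty finite vertex set, with snapshot components C^1_1, …, C^1_{k_1} at time 1 and C^2_1, …, C^2_{k_2} at time 2. Then k_1 ≤ |C^2_{i_2}| for every i_2 ∈ {1,…,k_2}, and k_2 ≤ |C^1_{i_1}| for every i_1 ∈ {1,…,k_1}. -/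
/-!
STATEMENT 9: In a temporally connected temporal graph of lifespan 2 on a nonempty
finite vertex set, the number of snapshot components at time 1 is at most the size of
every snapshot component at time 2, and vice versa.
-/

namespace Stmt9

/-- Non-strict journeys using temporal edges of `G`, all at times `≥ t₀`,
with nondecreasing time labels (at least one temporal edge is used). -/
inductive NSJourney {V : Type*} (G : Finset (Sym2 V × ℕ)) : ℕ → V → V → Prop
  | single {t₀ t : ℕ} {u v : V} (hle : t₀ ≤ t) (h : (s(u, v), t) ∈ G) : NSJourney G t₀ u v
  | cons {t₀ t : ℕ} {u v w : V} (hle : t₀ ≤ t) (h : (s(u, v), t) ∈ G)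
      (htail : NSJourney G t v w) : NSJourney G t₀ u w

def TemporallyConnected {V : Type*} (G : Finset (Sym2 V × ℕ)) : Prop :=
  ∀ u v : V, u ≠ v → NSJourney G 0 u v

/-- The snapshot of a temporal graph at time `t`; its connected components are the
snapshot components at time `t`. -/
def snapshot {V : Type*} (G : Finset (Sym2 V × ℕ)) (t : ℕ) : SimpleGraph V :=
  SimpleGraph.fromEdgeSet {e | (e, t) ∈ G}

theorem adj_or {V : Type*} {G : Finset (Sym2 V × ℕ)}
    (hvalid : ∀ et ∈ G, ¬ et.1.IsDiag ∧ (et.2 = 1 ∨ et.2 = 2)) {u v : V} {t : ℕ}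
    (h : (s(u, v), t) ∈ G) : (t = 1 ∨ t = 2) ∧ (snapshot G t).Adj u v := by
  have h1 := hvalid _ h
  refine ⟨h1.2, ?_⟩
  rw [snapshot, SimpleGraph.fromEdgeSet_adj]
  exact ⟨h, fun e => h1.1 (by simpa using e)⟩

theorem journey_split {V : Type*} {G : Finset (Sym2 V × ℕ)}
    (hvalid : ∀ et ∈ G, ¬ et.1.IsDiag ∧ (et.2 = 1 ∨ et.2 = 2)) {t : ℕ} {u v : V}
    (h : NSJourney G t u v) :
    ∃ x, (snapshot G 1).Reachable u x ∧ (snapshot G 2).Reachable x v ∧ (2 ≤ t → x = u) := by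
  induction h with
  | @single t₀ t u v hle h =>
    obtain ⟨rfl | rfl, ha⟩ := adj_or hvalid h
    · exact ⟨v, ha.reachable, .refl _, fun h => by omega⟩
    · exact ⟨u, .refl _, ha.reachable, fun _ => rfl⟩
  | @cons t₀ t u v w hle h _ ih =>
    obtain ⟨x, h1, h2, h3⟩ := ih
    obtain ⟨rfl | rfl, ha⟩ := adj_or hvalid h
    · exact ⟨x, ha.reachable.trans h1, h2, fun h => by omega⟩
    · obtain rfl := h3 le_rfl
      exact ⟨u, .refl _, ha.reachable.trans h2, fun _ => rfl⟩

theorem card_le_of_meet {V : Type*} [Fintype V] (A B : SimpleGraph V)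
    (c : B.ConnectedComponent)
    (h : ∀ d : A.ConnectedComponent, ∃ x ∈ c.supp, A.connectedComponentMk x = d) :
    Nat.card A.ConnectedComponent ≤ c.supp.ncard := by
  rw [← Nat.card_coe_set_eq]
  exact Nat.card_le_card_of_surjective (fun x : c.supp => A.connectedComponentMk x.1)
    (fun d => by obtain ⟨x, hx, e⟩ := h d; exact ⟨⟨x, hx⟩, e⟩)

theorem component_count_le_component_size {V : Type*} [Fintype V] [Nonempty V]
    (𝒢 : Finset (Sym2 V × ℕ))
    (hvalid : ∀ et ∈ 𝒢, ¬ et.1.IsDiag ∧ (et.2 = 1 ∨ et.2 = 2))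
    (hmax : ∃ et ∈ 𝒢, et.2 = 2)
    (hconn : TemporallyConnected 𝒢) :
    (∀ c : (snapshot 𝒢 2).ConnectedComponent,
      Nat.card ((snapshot 𝒢 1).ConnectedComponent) ≤ c.supp.ncard) ∧
    (∀ c : (snapshot 𝒢 1).ConnectedComponent,
      Nat.card ((snapshot 𝒢 2).ConnectedComponent) ≤ c.supp.ncard) := by
  have key : ∀ u v : V, ∃ x, (snapshot 𝒢 1).Reachable u x ∧ (snapshot 𝒢 2).Reachable x v := by
    intro u v
    by_cases e : u = v
    · subst e
      exact ⟨u, .refl _, .refl _⟩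
    · obtain ⟨x, h1, h2, _⟩ := journey_split hvalid (hconn u v e)
      exact ⟨x, h1, h2⟩
  constructor
  · intro c
    refine card_le_of_meet _ _ c fun d => ?_
    induction c using SimpleGraph.ConnectedComponent.ind with | _ v
    induction d using SimpleGraph.ConnectedComponent.ind with | _ u
    obtain ⟨x, h1, h2⟩ := key u v
    exact ⟨x, SimpleGraph.ConnectedComponent.sound h2, SimpleGraph.ConnectedComponent.sound h1.symm⟩
  · intro c
    refine card_le_of_meet _ _ c fun d => ?_
    induction c using SimpleGraph.ConnectedComponent.ind with | _ u
    induction d using SimpleGraph.ConnectedComponent.ind with | _ v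
    obtain ⟨x, h1, h2⟩ := key u v
    exact ⟨x, SimpleGraph.ConnectedComponent.sound h1.symm, SimpleGraph.ConnectedComponent.sound h2⟩

end Stmt9
end

section
/- Let G = (V, E) be a finite simple graph on n vertices with connected components C_1, …, C_k, and let c = min_i |C_i| be the minimum size of a component. Let 𝒢 be the temporal graph on V whose temporal edges are ({u,v}, 1) for each {u,v} ∈ E. Then there exists a set F' of exactly n − c temporal edges, all with time label 2, such that 𝒢 ↑ F' is temporally connected (with non-strict journeys). In particular, such a set can be obtained by choosing a component C_ℓ of minimum size and forming |C_ℓ| vertex-disjoint stars at time 2, each centered at a distinct vertex of C_ℓ, whose leaves partition V \ C_ℓ in such a way that every star contains at least one vertex from each component C_i with i ≠ ℓ. -/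
/-!
STATEMENT 10: (1+1)-TCA, upper bound.  Given a static graph `G` on `n` vertices with
minimum component size `c`, placed at time 1, there is a set `F'` of exactly `n − c`
temporal edges at time 2 making the temporal graph temporally connected; moreover `F'`
can be chosen to consist of `c` vertex-disjoint stars centered at the distinct vertices
of a minimum-size component `C_ℓ`, whose leaves partition `V \ C_ℓ`, each star
containing at least one vertex of every other component.
-/

namespace Stmt10

/-- Non-strict journeys using temporal edges of `G`, all at times `≥ t₀`,
with nondecreasing time labels (at least one temporal edge is used). -/
inductive NSJourney {V : Type*} (G : Finset (Sym2 V × ℕ)) : ℕ → V → V → Prop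
  | single {t₀ t : ℕ} {u v : V} (hle : t₀ ≤ t) (h : (s(u, v), t) ∈ G) : NSJourney G t₀ u v
  | cons {t₀ t : ℕ} {u v w : V} (hle : t₀ ≤ t) (h : (s(u, v), t) ∈ G)
      (htail : NSJourney G t v w) : NSJourney G t₀ u w

def TemporallyConnected {V : Type*} (G : Finset (Sym2 V × ℕ)) : Prop :=
  ∀ u v : V, u ≠ v → NSJourney G 0 u v

theorem NSJourney.of_walk {V : Type*} {G : SimpleGraph V} {H : Finset (Sym2 V × ℕ)}
    (h1 : ∀ u v, G.Adj u v → (s(u, v), 1) ∈ H) {u v : V} (p : G.Walk u v) :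
    ∀ t₀ ≤ 1, (u = v ∨ NSJourney H t₀ u v) ∧
      ∀ w, NSJourney H 1 v w → NSJourney H t₀ u w := by
  induction p with
  | nil =>
    intro t₀ ht
    refine ⟨Or.inl rfl, fun w hw => ?_⟩
    cases hw with
    | single hle h => exact .single (ht.trans hle) h
    | cons hle h ht' => exact .cons (ht.trans hle) h ht'
  | cons hadj p ih =>
    intro t₀ ht
    refine ⟨Or.inr ?_, fun w hw => .cons ht (h1 _ _ hadj) ((ih 1 le_rfl).2 w hw)⟩
    rcases (ih 1 le_rfl).1 with h | h
    · subst h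
      exact .single ht (h1 _ _ hadj)
    · exact .cons ht (h1 _ _ hadj) h

theorem exists_star_map {V : Type*} [Fintype V] (A B : Set V) (hA : A.Nonempty)
    (h : A.ncard ≤ B.ncard) :
    ∃ g : V → V, (∀ b, g b ∈ A) ∧ ∀ a ∈ A, ∃ b ∈ B, g b = a := by
  classical
  haveI : Nonempty A := hA.to_subtype
  have hc : Fintype.card A ≤ Fintype.card B := by
    rw [← Nat.card_eq_fintype_card, ← Nat.card_eq_fintype_card]
    exact h
  obtain ⟨e⟩ := Function.Embedding.nonempty_of_card_le hc
  have hinj : Function.Injective (fun a : A => (e a : V)) :=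
    fun x y hxy => e.injective (Subtype.ext hxy)
  refine ⟨fun b => (Function.invFun (fun a : A => (e a : V)) b : A),
    fun b => Subtype.property _, fun a ha => ⟨e ⟨a, ha⟩, (e ⟨a, ha⟩).2, ?_⟩⟩
  have := Function.leftInverse_invFun hinj ⟨a, ha⟩
  exact congrArg Subtype.val this

theorem oneplusone_tca_upper {V : Type*} [Fintype V] [DecidableEq V] [Nonempty V]
    (G : SimpleGraph V) (𝒢 : Finset (Sym2 V × ℕ))
    -- 𝒢 has the temporal edge ({u,v},1) for each edge {u,v} of G, and nothing else
    (h𝒢 : ∀ et : Sym2 V × ℕ, et ∈ 𝒢 ↔ et.1 ∈ G.edgeSet ∧ et.2 = 1)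
    (c : ℕ)
    -- c is the minimum size of a connected component of G
    (hcmin : ∀ d : G.ConnectedComponent, c ≤ d.supp.ncard)
    (hcex : ∃ d : G.ConnectedComponent, d.supp.ncard = c) :
    ∃ F' : Finset (Sym2 V × ℕ),
      F'.card = Fintype.card V - c ∧
      (∀ et ∈ F', ¬ et.1.IsDiag ∧ et.2 = 2) ∧
      TemporallyConnected (𝒢 ∪ F') ∧
      -- the star construction: a minimum component ℓ whose vertices are star centers
      ∃ ℓ : G.ConnectedComponent, ℓ.supp.ncard = c ∧
        -- every added edge joins a center in ℓ to a leaf outside ℓ, at time 2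
        (∀ et ∈ F', ∃ a ∈ ℓ.supp, ∃ b ∉ ℓ.supp, et = (s(a, b), 2)) ∧
        -- the stars are vertex-disjoint and their leaves partition V \ ℓ
        (∀ b : V, b ∉ ℓ.supp → ∃! a : V, (s(a, b), 2) ∈ F') ∧
        -- every star contains at least one vertex from each other component
        (∀ a ∈ ℓ.supp, ∀ d : G.ConnectedComponent, d ≠ ℓ →
          ∃ b ∈ d.supp, (s(a, b), 2) ∈ F') := by
  classical
  obtain ⟨ℓ, hℓ⟩ := hcex
  choose g hg1 hg2 using fun d : G.ConnectedComponent =>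
    exists_star_map ℓ.supp d.supp ℓ.nonempty_supp (hℓ.trans_le (hcmin d))
  let f : V → V := fun b => g (G.connectedComponentMk b) b
  have hf1 : ∀ b, f b ∈ ℓ.supp := fun b => hg1 _ b
  have hf2 : ∀ a ∈ ℓ.supp, ∀ d : G.ConnectedComponent, ∃ b ∈ d.supp, f b = a := by
    intro a ha d
    obtain ⟨b, hb, hab⟩ := hg2 d a ha
    refine ⟨b, hb, ?_⟩
    have : G.connectedComponentMk b = d := hb
    simp only [f, this, hab]
  let S : Finset V := Finset.univ.filter (fun b => b ∉ ℓ.supp)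
  let F : Finset (Sym2 V × ℕ) := S.image (fun b => (s(f b, b), 2))
  have hF : ∀ et, et ∈ F ↔ ∃ b, b ∉ ℓ.supp ∧ (s(f b, b), 2) = et := by
    intro et
    simp [F, S]
  have hF2 : ∀ a b, b ∉ ℓ.supp → ((s(a, b), 2) ∈ F ↔ f b = a) := by
    intro a b hb
    rw [hF]
    constructor
    · rintro ⟨b', hb', h⟩
      have h := (Prod.ext_iff.1 h).1
      rcases Sym2.eq_iff.1 h with ⟨h1, h2⟩ | ⟨h1, h2⟩
      · rw [← h2, h1]
      · exact absurd (h1 ▸ hf1 b') hb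
    · rintro rfl
      exact ⟨b, hb, rfl⟩
  have hne : ∀ d : G.ConnectedComponent, d ≠ ℓ → ∀ b ∈ d.supp, b ∉ ℓ.supp := by
    intro d hd b hb hb'
    exact hd ((show G.connectedComponentMk b = d from hb).symm.trans hb')
  refine ⟨F, ?_, ?_, ?_, ℓ, hℓ, ?_, ?_, ?_⟩
  · have hinj : Set.InjOn (fun b => ((s(f b, b), 2) : Sym2 V × ℕ)) S := by
      intro x hx y hy hxy
      have h := (Prod.ext_iff.1 hxy).1
      rcases Sym2.eq_iff.1 h with ⟨h1, h2⟩ | ⟨h1, h2⟩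
      · exact h2
      · have hy' : y ∉ ℓ.supp := by simpa [S] using hy
        exact absurd (h1 ▸ hf1 x) hy'
    rw [Finset.card_image_of_injOn hinj]
    have : S = (ℓ.supp.toFinset)ᶜ := by
      ext x; simp [S]
    rw [this, Finset.card_compl, ← hℓ, Set.ncard_eq_toFinset_card']
  · intro et het
    obtain ⟨b, hb, rfl⟩ := (hF et).1 het
    refine ⟨fun h => ?_, rfl⟩
    have h' : f b = b := by simpa using h
    exact hb (h' ▸ hf1 b)
  · intro u v huv
    have h1 : ∀ x y, G.Adj x y → (s(x, y), 1) ∈ 𝒢 ∪ F := by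
      intro x y hxy
      exact Finset.mem_union_left _ ((h𝒢 _).2 ⟨hxy, rfl⟩)
    have hmem : ∀ b, b ∉ ℓ.supp → (s(f b, b), 2) ∈ 𝒢 ∪ F := fun b hb =>
      Finset.mem_union_right _ ((hF2 _ _ hb).2 rfl)
    have hmem' : ∀ b, b ∉ ℓ.supp → (s(b, f b), 2) ∈ 𝒢 ∪ F := fun b hb => by
      rw [Sym2.eq_swap]; exact hmem b hb
    have key : ∀ x y z, G.connectedComponentMk x = G.connectedComponentMk y →
        NSJourney (𝒢 ∪ F) 1 y z → NSJourney (𝒢 ∪ F) 0 x z := by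
      intro x y z hxy hz
      obtain ⟨p⟩ := SimpleGraph.ConnectedComponent.exact hxy
      exact (NSJourney.of_walk h1 p 0 (by norm_num)).2 z hz
    by_cases hsame : G.connectedComponentMk u = G.connectedComponentMk v
    · obtain ⟨p⟩ := SimpleGraph.ConnectedComponent.exact hsame
      exact (NSJourney.of_walk h1 p 0 (by norm_num)).1.resolve_left huv
    by_cases hu : u ∈ ℓ.supp
    · have hu' : G.connectedComponentMk u = ℓ := hu
      have hv : v ∉ ℓ.supp := fun hv => hsame (hu'.trans (Eq.symm hv))
      exact key u (f v) v (hu'.trans (Eq.symm (hf1 v))) (.single (by norm_num) (hmem v hv))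
    · by_cases hv : v ∈ ℓ.supp
      · obtain ⟨b, hb, hbv⟩ := hf2 v hv (G.connectedComponentMk u)
        have hbℓ := hne _ hu b hb
        refine key u b v (Eq.symm hb) (.single (t := 2) (by norm_num) ?_)
        rw [← hbv]
        exact hmem' b hbℓ
      · obtain ⟨b, hb, hbv⟩ := hf2 (f v) (hf1 v) (G.connectedComponentMk u)
        have hbℓ := hne _ hu b hb
        refine key u b v (Eq.symm hb) (.cons (t := 2) (v := f v) (by norm_num) ?_
          (.single le_rfl (hmem v hv)))
        rw [← hbv]
        exact hmem' b hbℓ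
  · intro et het
    obtain ⟨b, hb, rfl⟩ := (hF et).1 het
    exact ⟨f b, hf1 b, b, hb, rfl⟩
  · intro b hb
    exact ⟨f b, (hF2 _ _ hb).2 rfl, fun y hy => ((hF2 _ _ hb).1 hy).symm⟩
  · intro a ha d hd
    obtain ⟨b, hb, hab⟩ := hf2 a ha d
    exact ⟨b, hb, (hF2 _ _ (hne d hd b hb)).2 hab⟩

end Stmt10
end

section
/- Let G = (V, E) be a finite simple graph on n vertices with connected components C_1, …, C_k, and let c = min_i |C_i|. Let 𝒢 be the temporal graph on V whose temporal edges are ({u,v}, 1) for each {u,v} ∈ E. Then every set F' of temporal edges, all with time label 2, such that 𝒢 ↑ F' is temporally connected (with non-strict journeys), satisfies |F'| ≥ n − c. -/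
/-!
STATEMENT 11: (1+1)-TCA, lower bound.  Given a static graph `G` on `n` vertices with
minimum component size `c`, placed at time 1, every set `F'` of temporal edges at time
2 whose addition makes the temporal graph temporally connected has size at least
`n − c`.
-/

namespace Stmt11

/-- Non-strict journeys using temporal edges of `G`, all at times `≥ t₀`,
with nondecreasing time labels (at least one temporal edge is used). -/
inductive NSJourney {V : Type*} (G : Finset (Sym2 V × ℕ)) : ℕ → V → V → Prop
  | single {t₀ t : ℕ} {u v : V} (hle : t₀ ≤ t) (h : (s(u, v), t) ∈ G) : NSJourney G t₀ u v
  | cons {t₀ t : ℕ} {u v w : V} (hle : t₀ ≤ t) (h : (s(u, v), t) ∈ G)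
      (htail : NSJourney G t v w) : NSJourney G t₀ u w

def TemporallyConnected {V : Type*} (G : Finset (Sym2 V × ℕ)) : Prop :=
  ∀ u v : V, u ≠ v → NSJourney G 0 u v

inductive Lay {V : Type*} (C : Set V) (F : Finset (Sym2 V × ℕ)) : ℕ → V → Prop
  | base {v : V} (h : v ∈ C) : Lay C F 0 v
  | step {n : ℕ} {u v : V} (hu : Lay C F n u) (h : (s(u, v), 2) ∈ F) : Lay C F (n + 1) v

theorem lay_edge {V : Type*} [DecidableEq V] {G : SimpleGraph V} {𝒢 F : Finset (Sym2 V × ℕ)}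
    (h𝒢 : ∀ et : Sym2 V × ℕ, et ∈ 𝒢 ↔ et.1 ∈ G.edgeSet ∧ et.2 = 1)
    (hF : ∀ et ∈ F, ¬ et.1.IsDiag ∧ et.2 = 2) (d : G.ConnectedComponent)
    {t₀ t : ℕ} {u v : V} (hle : t₀ ≤ t) (h : (s(u, v), t) ∈ 𝒢 ∪ F)
    (hu : u ∈ d.supp ∨ (2 ≤ t₀ ∧ ∃ n, Lay d.supp F n u)) :
    v ∈ d.supp ∨ (2 ≤ t ∧ ∃ n, Lay d.supp F n v) := by
  rcases Finset.mem_union.1 h with h | h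
  · obtain ⟨h1, h2⟩ := (h𝒢 _).1 h
    simp only at h1 h2
    rcases hu with hu | hu
    · left
      have ha : G.Adj u v := h1
      rw [SimpleGraph.ConnectedComponent.mem_supp_iff] at hu ⊢
      rw [← hu]
      exact SimpleGraph.ConnectedComponent.sound ha.symm.reachable
    · omega
  · have h2 := (hF _ h).2
    simp only at h2
    subst h2
    right
    refine ⟨le_rfl, ?_⟩
    rcases hu with hu | ⟨_, n, hn⟩
    · exact ⟨1, .step (.base hu) h⟩
    · exact ⟨n + 1, .step hn h⟩

theorem lay_journey {V : Type*} [DecidableEq V] {G : SimpleGraph V} {𝒢 F : Finset (Sym2 V × ℕ)}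
    (h𝒢 : ∀ et : Sym2 V × ℕ, et ∈ 𝒢 ↔ et.1 ∈ G.edgeSet ∧ et.2 = 1)
    (hF : ∀ et ∈ F, ¬ et.1.IsDiag ∧ et.2 = 2) (d : G.ConnectedComponent)
    {t₀ : ℕ} {u v : V} (hj : NSJourney (𝒢 ∪ F) t₀ u v)
    (hu : u ∈ d.supp ∨ (2 ≤ t₀ ∧ ∃ n, Lay d.supp F n u)) :
    ∃ n, Lay d.supp F n v := by
  induction hj with
  | single hle h =>
    rcases lay_edge h𝒢 hF d hle h hu with h | h
    · exact ⟨0, .base h⟩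
    · exact h.2
  | cons hle h _ ih => exact ih (lay_edge h𝒢 hF d hle h hu)

theorem lay_card {V : Type*} [Fintype V] (C : Set V) (F : Finset (Sym2 V × ℕ))
    (h : ∀ v, ∃ n, Lay C F n v) : Fintype.card V - C.ncard ≤ F.card := by
  classical
  have key : ∀ v : V, v ∉ C → ∃ u, (s(u, v), 2) ∈ F ∧ Nat.find (h u) < Nat.find (h v) := by
    intro v hv
    have hs := Nat.find_spec (h v)
    generalize hk : Nat.find (h v) = k at hs
    cases hs with
    | base h' => exact absurd h' hv
    | step hu he => exact ⟨_, he, Nat.lt_succ_of_le (Nat.find_min' _ hu)⟩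
  choose! f hf hlt using key
  have hcard : Fintype.card V - C.ncard = (C.toFinsetᶜ).card := by
    rw [Finset.card_compl, Set.ncard_eq_toFinset_card']
  rw [hcard]
  refine Finset.card_le_card_of_injOn (fun v => (s(f v, v), 2)) ?_ ?_
  · intro v hv
    exact hf v (by simpa using hv)
  · intro v hv w hw hvw
    have h1 := hlt v (by simpa using hv)
    have h2 := hlt w (by simpa using hw)
    simp only [Prod.mk.injEq, and_true, Sym2.eq_iff] at hvw
    rcases hvw with ⟨_, h⟩ | ⟨ha, hb⟩
    · exact h
    · rw [ha] at h1
      rw [← hb] at h2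
      omega

theorem oneplusone_tca_lower {V : Type*} [Fintype V] [DecidableEq V] [Nonempty V]
    (G : SimpleGraph V) (𝒢 : Finset (Sym2 V × ℕ))
    -- 𝒢 has the temporal edge ({u,v},1) for each edge {u,v} of G, and nothing else
    (h𝒢 : ∀ et : Sym2 V × ℕ, et ∈ 𝒢 ↔ et.1 ∈ G.edgeSet ∧ et.2 = 1)
    (c : ℕ)
    -- c is the minimum size of a connected component of G
    (hcmin : ∀ d : G.ConnectedComponent, c ≤ d.supp.ncard)
    (hcex : ∃ d : G.ConnectedComponent, d.supp.ncard = c)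
    (F' : Finset (Sym2 V × ℕ))
    (hF' : ∀ et ∈ F', ¬ et.1.IsDiag ∧ et.2 = 2)
    (hconn : TemporallyConnected (𝒢 ∪ F')) :
    Fintype.card V - c ≤ F'.card := by
  obtain ⟨d, rfl⟩ := hcex
  apply lay_card
  intro v
  obtain ⟨u, hu⟩ := d.nonempty_supp
  by_cases huv : u = v
  · subst huv
    exact ⟨0, .base hu⟩
  · exact lay_journey h𝒢 hF' d (hconn u v huv) (Or.inl hu)

end Stmt11
end

section
/- Let 𝒢 be a temporal graph of lifespan T on a finite vertex set V with a weight function w assigning a nonnegative weight to each temporal edge, let X = {(u_1,v_1), …, (u_p,v_p)} be a set of p pairs of vertices, and let K ≤ p and B be nonnegative numbers. Let G_T be the temporal expansion of 𝒢: vertices v^t for v ∈ V and t ∈ {1,…,T+1}, and for each temporal edge (e,t) = ({u,v},t) two vertices a_{(e,t)}, a'_{(e,t)}; arcs of weight 0: (v^t, v^{t+1}) for all v, t, and (u^t, a_{(e,t)}), (v^t, a_{(e,t)}), (a'_{(e,t)}, u^{t+1}), (a'_{(e,t)}, v^{t+1}) for each temporal edge; and one arc (a_{(e,t)}, a'_{(e,t)})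 of weight w(e,t) for each temporal edge. Then there exists a set S of temporal edges of 𝒢 with total weight at most B such that at least K of the pairs (u_i, v_i) are connected by a strict journey using only temporal edges of S, if and only if there exists a subgraph H_T of G_T with total arc weight at most B such that at least K of the pairs (u_i^1, v_i^{T+1}) are connected by a directed path in H_T. -/
/-!
STATEMENT 13: TG-Steiner reduces to DG-Steiner via the temporal expansion (strict
setting).  There is a set `S` of temporal edges of `𝒢` of total weight at most `B`
such that at least `K` of the given pairs are connected by a strict journey using only
edges of `S`, iff there is a subgraph `H` (a subset of the arcs) of the weighted
temporal expansion `G_T` of total arc weight at most `B` such that at least `K` of the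
pairs `(u_i^1, v_i^{T+1})` are connected by a directed path in `H`.  (A pair with
`u_i = v_i` is trivially connected.)  In the expansion all arcs have weight 0 except
the arc `(a_{(e,t)}, a'_{(e,t)})` of each temporal edge, which has weight `w (e,t)`.
-/

namespace Stmt13

/-- Strict journeys using temporal edges of `G`, all at times `≥ t₀`,
with strictly increasing time labels (at least one temporal edge is used). -/
inductive SJourney {V : Type*} (G : Finset (Sym2 V × ℕ)) : ℕ → V → V → Prop
  | single {t₀ t : ℕ} {u v : V} (hle : t₀ ≤ t) (h : (s(u, v), t) ∈ G) : SJourney G t₀ u v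
  | cons {t₀ t : ℕ} {u v w : V} (hle : t₀ ≤ t) (h : (s(u, v), t) ∈ G)
      (htail : SJourney G (t + 1) v w) : SJourney G t₀ u w

/-- Vertices of the temporal expansion: `Sum.inl (v, t)` is the copy `v^t`, and
`Sum.inr ((e, t), false)` (resp. `true`) is the vertex `a_{(e,t)}` (resp. `a'_{(e,t)}`)
of the gadget for a temporal edge `(e, t)`. -/
abbrev EV (V : Type*) := (V × ℕ) ⊕ ((Sym2 V × ℕ) × Bool)

/-- Arcs of the temporal expansion of `G` with lifespan `T`. -/
def ExpArc {V : Type*} (G : Finset (Sym2 V × ℕ)) (T : ℕ) (X Y : EV V) : Prop :=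
  (∃ (v : V) (t : ℕ), 1 ≤ t ∧ t ≤ T ∧ X = Sum.inl (v, t) ∧ Y = Sum.inl (v, t + 1)) ∨
  (∃ et ∈ G, ∃ w ∈ et.1, X = Sum.inl (w, et.2) ∧ Y = Sum.inr (et, false)) ∨
  (∃ et ∈ G, X = Sum.inr (et, false) ∧ Y = Sum.inr (et, true)) ∨
  (∃ et ∈ G, ∃ w ∈ et.1, X = Sum.inr (et, true) ∧ Y = Sum.inl (w, et.2 + 1))

/-- The weight of an arc of the expansion: the arc `(a_{(e,t)}, a'_{(e,t)})` has weight
`w (e,t)`; all other arcs have weight 0. -/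
def arcWeight {V : Type*} [DecidableEq V] (w : Sym2 V × ℕ → ℝ) : EV V × EV V → ℝ
  | (Sum.inr (et, false), Sum.inr (et', true)) => if et = et' then w et else 0
  | _ => 0

theorem SJourney.weaken {V : Type*} {G : Finset (Sym2 V × ℕ)} {a b : ℕ} {u v : V}
    (h : SJourney G a u v) (hb : b ≤ a) : SJourney G b u v := by
  cases h with
  | single hle h => exact .single (hb.trans hle) h
  | cons hle h ht => exact .cons (hb.trans hle) h ht

theorem reach_wait {V : Type*} {S : Finset (Sym2 V × ℕ)} {T : ℕ} {R : EV V → EV V → Prop}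
    (hR : ∀ X Y, ExpArc S T X Y → R X Y) (v : V) {s b : ℕ} (hs : 1 ≤ s) (hsb : s ≤ b)
    (hb : b ≤ T + 1) :
    Relation.ReflTransGen R (Sum.inl (v, s)) (Sum.inl (v, b)) := by
  induction b, hsb using Nat.le_induction with
  | base => exact .refl
  | succ n hn ih =>
    exact (ih (by omega)).tail (hR _ _ (Or.inl ⟨v, n, by omega, by omega, rfl, rfl⟩))

theorem reach_edge {V : Type*} {S : Finset (Sym2 V × ℕ)} {T : ℕ} {R : EV V → EV V → Prop}
    (hR : ∀ X Y, ExpArc S T X Y → R X Y) {u v : V} {t : ℕ} (h : (s(u, v), t) ∈ S) :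
    Relation.ReflTransGen R (Sum.inl (u, t)) (Sum.inl (v, t + 1)) := by
  refine ((Relation.ReflTransGen.single (b := Sum.inr ((s(u, v), t), false)) (hR _ _ ?_)).tail
    (b := Sum.inr ((s(u, v), t), false)) (c := Sum.inr ((s(u, v), t), true)) (hR _ _ ?_)).tail
    (hR _ _ ?_)
  · exact Or.inr (Or.inl ⟨_, h, u, by simp, rfl, rfl⟩)
  · exact Or.inr (Or.inr (Or.inl ⟨_, h, rfl, rfl⟩))
  · exact Or.inr (Or.inr (Or.inr ⟨_, h, v, by simp, rfl, rfl⟩))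

theorem reach_journey {V : Type*} {S : Finset (Sym2 V × ℕ)} {T : ℕ} {R : EV V → EV V → Prop}
    (hR : ∀ X Y, ExpArc S T X Y → R X Y) (hS : ∀ et ∈ S, 1 ≤ et.2 ∧ et.2 ≤ T)
    {t₀ : ℕ} {u v : V} (h : SJourney S t₀ u v) :
    ∀ s, 1 ≤ s → s ≤ max 1 t₀ →
      Relation.ReflTransGen R (Sum.inl (u, s)) (Sum.inl (v, T + 1)) := by
  induction h with
  | single hle h =>
    intro s h1 h2
    have := hS _ h
    simp only at this
    exact ((reach_wait hR _ h1 (by omega) (by omega)).trans (reach_edge hR h)).trans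
      (reach_wait hR _ (by omega) (by omega) (by omega))
  | cons hle h ht ih =>
    intro s h1 h2
    have := hS _ h
    simp only at this
    exact ((reach_wait hR _ h1 (by omega) (by omega)).trans (reach_edge hR h)).trans
      (ih _ (by omega) (by omega))

/-- Invariant for vertices from which `v` at the end is reachable. -/
def Inv {V : Type*} (S : Finset (Sym2 V × ℕ)) (v : V) : EV V → Prop
  | Sum.inl (u, t) => u = v ∨ SJourney S t u v
  | Sum.inr (et, false) => et ∈ S ∧ ∃ x ∈ et.1, x = v ∨ SJourney S (et.2 + 1) x v
  | Sum.inr (et, true) => ∃ x ∈ et.1, x = v ∨ SJourney S (et.2 + 1) x v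

theorem inv_step {V : Type*} {G S : Finset (Sym2 V × ℕ)} {T : ℕ} {v : V} {X Y : EV V}
    (h : ExpArc G T X Y)
    (hS : ∀ et, X = Sum.inr (et, false) → Y = Sum.inr (et, true) → et ∈ S)
    (hY : Inv S v Y) : Inv S v X := by
  rcases h with ⟨u, t, -, -, rfl, rfl⟩ | ⟨et, -, u, hu, rfl, rfl⟩ | ⟨et, -, rfl, rfl⟩ |
    ⟨et, -, u, hu, rfl, rfl⟩
  · exact hY.imp id (fun h => h.weaken (by omega))
  · obtain ⟨hm, x, hx, hxv⟩ := hY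
    by_cases hux : u = x
    · subst hux
      exact hxv.imp id (fun h => h.weaken (by omega))
    · have he : et.1 = s(u, x) := ((Sym2.mem_and_mem_iff hux).1 ⟨hu, hx⟩)
      have hm' : (s(u, x), et.2) ∈ S := by rw [← he]; exact hm
      right
      rcases hxv with rfl | h
      · exact .single le_rfl hm'
      · exact .cons le_rfl hm' h
  · exact ⟨hS et rfl rfl, hY⟩
  · exact ⟨u, hu, hY⟩

theorem arcWeight_nonneg {V : Type*} [DecidableEq V] {w : Sym2 V × ℕ → ℝ}
    (hw : ∀ et, 0 ≤ w et) (a : EV V × EV V) : 0 ≤ arcWeight w a := by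
  unfold arcWeight
  split
  · split_ifs
    · exact hw _
    · exact le_rfl
  · exact le_rfl

/-- The weighted arc of a temporal edge. -/
def mid {V : Type*} (et : Sym2 V × ℕ) : EV V × EV V :=
  (Sum.inr (et, false), Sum.inr (et, true))

theorem mid_inj {V : Type*} : Function.Injective (mid (V := V)) := by
  intro a b h
  simpa [mid] using h

theorem sum_mid {V : Type*} [DecidableEq V] (w : Sym2 V × ℕ → ℝ) (S : Finset (Sym2 V × ℕ)) :
    ∑ a ∈ S.image mid, arcWeight w a = ∑ et ∈ S, w et := by
  rw [Finset.sum_image (fun a _ b _ h => mid_inj h)]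
  simp [mid, arcWeight]

theorem tgSteiner_iff_dgSteiner {V : Type*} [Fintype V] [DecidableEq V]
    (G : Finset (Sym2 V × ℕ)) (T : ℕ)
    (hvalid : ∀ et ∈ G, ¬ et.1.IsDiag ∧ 1 ≤ et.2)
    (hle : ∀ et ∈ G, et.2 ≤ T)
    (hmax : ∃ et ∈ G, et.2 = T)
    (w : Sym2 V × ℕ → ℝ) (hw : ∀ et, 0 ≤ w et)
    (p : ℕ) (pairs : Fin p → V × V)
    (K : ℕ) (hKp : K ≤ p) (B : ℝ) (hB : 0 ≤ B) :
    (∃ S ⊆ G, (∑ et ∈ S, w et) ≤ B ∧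
        ∃ I : Finset (Fin p), K ≤ I.card ∧ ∀ i ∈ I,
          (pairs i).1 = (pairs i).2 ∨ SJourney S 0 (pairs i).1 (pairs i).2) ↔
      (∃ H : Finset (EV V × EV V),
        (∀ a ∈ H, ExpArc G T a.1 a.2) ∧
        (∑ a ∈ H, arcWeight w a) ≤ B ∧
        ∃ I : Finset (Fin p), K ≤ I.card ∧ ∀ i ∈ I,
          Relation.ReflTransGen (fun X Y : EV V => (X, Y) ∈ H)
            (Sum.inl ((pairs i).1, 1)) (Sum.inl ((pairs i).2, T + 1))) := by
  classical
  constructor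
  · rintro ⟨S, hSG, hSB, I, hI, hpairs⟩
    have hS : ∀ et ∈ S, 1 ≤ et.2 ∧ et.2 ≤ T := fun et h =>
      ⟨(hvalid et (hSG h)).2, hle et (hSG h)⟩
    let F : Finset (EV V) :=
      ((Finset.univ : Finset V) ×ˢ Finset.range (T + 2)).image Sum.inl ∪
        (S ×ˢ (Finset.univ : Finset Bool)).image Sum.inr
    let H : Finset (EV V × EV V) := (F ×ˢ F).filter (fun a => ExpArc S T a.1 a.2)
    have hH : ∀ X Y, ExpArc S T X Y → (X, Y) ∈ H := by
      intro X Y h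
      refine Finset.mem_filter.2 ⟨?_, h⟩
      rcases h with ⟨u, t, h1, h2, rfl, rfl⟩ | ⟨et, he, u, hu, rfl, rfl⟩ | ⟨et, he, rfl, rfl⟩ |
        ⟨et, he, u, hu, rfl, rfl⟩
      · simp [F]; omega
      · have := hS et he
        simp [F, he]; omega
      · simp [F, he]
      · have := hS et he
        simp [F, he]; omega
    refine ⟨H, ?_, ?_, I, hI, ?_⟩
    · intro a ha
      rcases (Finset.mem_filter.1 ha).2 with h | ⟨et, he, h⟩ | ⟨et, he, h⟩ | ⟨et, he, h⟩
      · exact Or.inl h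
      · exact Or.inr (Or.inl ⟨et, hSG he, h⟩)
      · exact Or.inr (Or.inr (Or.inl ⟨et, hSG he, h⟩))
      · exact Or.inr (Or.inr (Or.inr ⟨et, hSG he, h⟩))
    · refine le_of_eq_of_le ?_ hSB
      rw [← sum_mid]
      symm
      apply Finset.sum_subset
      · intro a ha
        obtain ⟨et, he, rfl⟩ := Finset.mem_image.1 ha
        exact hH _ _ (Or.inr (Or.inr (Or.inl ⟨et, he, rfl, rfl⟩)))
      · rintro ⟨X, Y⟩ ha hna
        rcases (Finset.mem_filter.1 ha).2 with ⟨u, t, h1, h2, h3, h4⟩ | ⟨et, he, u, hu, h3, h4⟩ |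
          ⟨et, he, h3, h4⟩ | ⟨et, he, u, hu, h3, h4⟩
        · simp only at h3 h4; subst h3 h4; rfl
        · simp only at h3 h4; subst h3 h4; rfl
        · simp only at h3 h4; subst h3 h4
          exact absurd (Finset.mem_image.2 ⟨et, he, rfl⟩) hna
        · simp only at h3 h4; subst h3 h4; rfl
    · intro i hi
      rcases hpairs i hi with h | h
      · rw [h]
        exact reach_wait hH _ le_rfl (by omega) le_rfl
      · exact reach_journey hH hS h 1 le_rfl (by simp)
  · rintro ⟨H, hH, hHB, I, hI, hpairs⟩
    refine ⟨G.filter (fun et => mid et ∈ H), Finset.filter_subset _ _, ?_, I, hI, ?_⟩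
    · refine le_trans ?_ hHB
      rw [← sum_mid]
      apply Finset.sum_le_sum_of_subset_of_nonneg
      · intro a ha
        obtain ⟨et, he, rfl⟩ := Finset.mem_image.1 ha
        exact (Finset.mem_filter.1 he).2
      · intro a _ _
        exact arcWeight_nonneg hw a
    · intro i hi
      have key : Inv (G.filter (fun et => mid et ∈ H)) (pairs i).2
          (Sum.inl ((pairs i).1, 1)) := by
        refine Relation.ReflTransGen.head_induction_on (hpairs i hi) (Or.inl rfl) ?_
        intro X Y hXY _ hY
        refine inv_step (hH _ hXY) ?_ hY
        rintro et rfl rfl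
        refine Finset.mem_filter.2 ⟨?_, hXY⟩
        rcases hH _ hXY with ⟨u, t, h1, h2, h3, h4⟩ | ⟨et', he, u, hu, h3, h4⟩ |
          ⟨et', he, h3, h4⟩ | ⟨et', he, u, hu, h3, h4⟩
        · simp at h3
        · simp at h3
        · simp at h3
          rw [h3]; exact he
        · simp at h3
      exact key.imp id (fun h => h.weaken (by omega))

end Stmt13
end

section
/- Let 𝒢 be a temporal graph of lifespan T on a finite vertex set V. Define the directed graph G_T' (the non-strict temporal expansion of 𝒢) as follows: for each v ∈ V and each t ∈ {1, …, T+1} there is a vertex v^t; for each v ∈ V and t ∈ {1, …, T} there is an arc (v^t, v^{t+1}); for each temporal edge (e,t) = ({u,v}, t) of 𝒢 there are two vertices a_{(e,t)} and a'_{(e,t)} and five arcs (u^t, a_{(e,t)}), (v^t, a_{(e,t)}), (a_{(e,t)}, a'_{(e,t)}), (a'_{(e,t)}, u^{t+1}), (a'_{(e,t)}, v^{t+1}); and additionally, for every two distinct temporal edges (e,t) and (f,t) at the same time t that share an endpoint, the arcs (a'_{(e,t)}, a_{(f,t)}) and (a'_{(f,t)}, a_{(e,t)}). Then for all vertices u,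 v ∈ V, there is a non-strict journey from u to v in 𝒢 if and only if there is a directed path from u^1 to v^{T+1} in G_T' that uses at least one arc of the form (a_{(e,t)}, a'_{(e,t)}). -/
/-!
STATEMENT 14: Correctness of the non-strict temporal expansion.  In addition to the
arcs of the (strict) temporal expansion, `G_T'` has, for every two distinct temporal
edges `(e,t)` and `(f,t)` at the same time that share an endpoint, the arcs
`(a'_{(e,t)}, a_{(f,t)})` and `(a'_{(f,t)}, a_{(e,t)})`.  Then a non-strict journey
from `u` to `v` exists in `𝒢` iff there is a directed path from `u^1` to `v^{T+1}` in
`G_T'` using at least one arc of the form `(a_{(e,t)}, a'_{(e,t)})`.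
-/

namespace Stmt14

/-- Non-strict journeys using temporal edges of `G`, all at times `≥ t₀`,
with nondecreasing time labels (at least one temporal edge is used). -/
inductive NSJourney {V : Type*} (G : Finset (Sym2 V × ℕ)) : ℕ → V → V → Prop
  | single {t₀ t : ℕ} {u v : V} (hle : t₀ ≤ t) (h : (s(u, v), t) ∈ G) : NSJourney G t₀ u v
  | cons {t₀ t : ℕ} {u v w : V} (hle : t₀ ≤ t) (h : (s(u, v), t) ∈ G)
      (htail : NSJourney G t v w) : NSJourney G t₀ u w

/-- Vertices of the temporal expansion: `Sum.inl (v, t)` is the copy `v^t`, and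
`Sum.inr ((e, t), false)` (resp. `true`) is the vertex `a_{(e,t)}` (resp. `a'_{(e,t)}`)
of the gadget for a temporal edge `(e, t)`. -/
abbrev EV (V : Type*) := (V × ℕ) ⊕ ((Sym2 V × ℕ) × Bool)

/-- Arcs of the (strict) temporal expansion of `G` with lifespan `T`. -/
def ExpArc {V : Type*} (G : Finset (Sym2 V × ℕ)) (T : ℕ) (X Y : EV V) : Prop :=
  (∃ (v : V) (t : ℕ), 1 ≤ t ∧ t ≤ T ∧ X = Sum.inl (v, t) ∧ Y = Sum.inl (v, t + 1)) ∨
  (∃ et ∈ G, ∃ w ∈ et.1, X = Sum.inl (w, et.2) ∧ Y = Sum.inr (et, false)) ∨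
  (∃ et ∈ G, X = Sum.inr (et, false) ∧ Y = Sum.inr (et, true)) ∨
  (∃ et ∈ G, ∃ w ∈ et.1, X = Sum.inr (et, true) ∧ Y = Sum.inl (w, et.2 + 1))

/-- Arcs of the non-strict temporal expansion: the arcs of the strict expansion,
plus the arcs `(a'_{(e,t)}, a_{(f,t)})` for distinct temporal edges `(e,t)`, `(f,t)`
at the same time step sharing an endpoint. -/
def ExpArc' {V : Type*} (G : Finset (Sym2 V × ℕ)) (T : ℕ) (X Y : EV V) : Prop :=
  ExpArc G T X Y ∨
  (∃ et ∈ G, ∃ ft ∈ G, et ≠ ft ∧ et.2 = ft.2 ∧ (∃ z : V, z ∈ et.1 ∧ z ∈ ft.1) ∧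
    X = Sum.inr (et, true) ∧ Y = Sum.inr (ft, false))

/-- The arcs of the form `(a_{(e,t)}, a'_{(e,t)})`. -/
def SpecialArc {V : Type*} (G : Finset (Sym2 V × ℕ)) (X Y : EV V) : Prop :=
  ∃ et ∈ G, X = Sum.inr (et, false) ∧ Y = Sum.inr (et, true)

theorem NSJourney.mono {V : Type*} {G : Finset (Sym2 V × ℕ)} {a b : ℕ} {u v : V}
    (hab : a ≤ b) (h : NSJourney G b u v) : NSJourney G a u v := by
  cases h with
  | single hle h => exact .single (hab.trans hle) h
  | cons hle h ht => exact .cons (hab.trans hle) h ht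

theorem journey_ext {V : Type*} {G : Finset (Sym2 V × ℕ)} {et : Sym2 V × ℕ} (het : et ∈ G)
    {w z v : V} (hw : w ∈ et.1) (hz : z ∈ et.1) (h : z = v ∨ NSJourney G et.2 z v) :
    NSJourney G et.2 w v := by
  obtain ⟨e, t⟩ := et
  by_cases hwz : w = z
  · subst hwz
    rcases h with rfl | h
    · obtain ⟨y, rfl⟩ := Sym2.mem_iff_exists.1 hw
      refine .cons (v := y) le_rfl het (.single le_rfl ?_)
      rw [Sym2.eq_swap]; exact het
    · exact h
  · have : e = s(w, z) := (Sym2.mem_and_mem_iff hwz).1 ⟨hw, hz⟩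
    subst this
    rcases h with rfl | h
    · exact .single le_rfl het
    · exact .cons le_rfl het h

def Good {V : Type*} (G : Finset (Sym2 V × ℕ)) (v : V) (b : Prop) : EV V → Prop
  | Sum.inl (w, t) => (b ∧ w = v) ∨ NSJourney G t w v
  | Sum.inr (et, _) => ∀ w ∈ et.1, NSJourney G et.2 w v

theorem good_step {V : Type*} {G : Finset (Sym2 V × ℕ)} {T : ℕ} {v : V} {b : Prop} {X Y : EV V}
    (h : ExpArc' G T X Y) (hY : Good G v b Y) : Good G v b X := by
  rcases h with (⟨w, t, -, -, rfl, rfl⟩ | ⟨et, het, w, hw, rfl, rfl⟩ | ⟨et, het, rfl, rfl⟩ |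
    ⟨et, het, w, hw, rfl, rfl⟩) | ⟨et, het, ft, hft, -, heq, ⟨z, hz, hz'⟩, rfl, rfl⟩
  · exact hY.imp id (NSJourney.mono (Nat.le_succ t))
  · exact Or.inr (hY w hw)
  · exact hY
  · intro x hx
    exact journey_ext het hx hw (hY.imp And.right (NSJourney.mono (Nat.le_succ _)))
  · intro x hx
    refine journey_ext het hx hz (Or.inr ?_)
    rw [heq]; exact hY z hz'

theorem good_path {V : Type*} {G : Finset (Sym2 V × ℕ)} {T : ℕ} {v : V} {b : Prop} {X Y : EV V}
    (h : Relation.ReflTransGen (ExpArc' G T) X Y) (hY : Good G v b Y) : Good G v b X := by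
  induction h using Relation.ReflTransGen.head_induction_on with
  | refl => exact hY
  | head h _ ih => exact good_step h ih

theorem wait_path {V : Type*} {G : Finset (Sym2 V × ℕ)} {T : ℕ} (w : V) {a b : ℕ}
    (ha : 1 ≤ a) (hab : a ≤ b) (hb : b ≤ T + 1) :
    Relation.ReflTransGen (ExpArc' G T) (Sum.inl (w, a)) (Sum.inl (w, b)) := by
  induction b, hab using Nat.le_induction with
  | base => exact .refl
  | succ n hn ih =>
    exact (ih (by omega)).tail (Or.inl (Or.inl ⟨w, n, by omega, by omega, rfl, rfl⟩))

theorem journey_path {V : Type*} {G : Finset (Sym2 V × ℕ)} {T : ℕ}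
    (hle : ∀ et ∈ G, et.2 ≤ T) {t₀ : ℕ} {u v : V} (h : NSJourney G t₀ u v) :
    ∃ et ∈ G, t₀ ≤ et.2 ∧ u ∈ et.1 ∧
      Relation.ReflTransGen (ExpArc' G T) (Sum.inr (et, true)) (Sum.inl (v, T + 1)) := by
  induction h with
  | @single t₀ t u v hl h =>
    refine ⟨_, h, hl, Sym2.mem_mk_left _ _, .head ?_ (wait_path v (a := t + 1) ?_ ?_ le_rfl)⟩
    · exact Or.inl (Or.inr (Or.inr (Or.inr ⟨_, h, v, Sym2.mem_mk_right _ _, rfl, rfl⟩)))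
    · omega
    · have := hle _ h
      simp only at this
      omega
  | @cons t₀ t u v w hl h _ ih =>
    obtain ⟨ft, hft, htf, hv, hp⟩ := ih
    refine ⟨_, h, hl, Sym2.mem_mk_left _ _, ?_⟩
    have hs : ExpArc' G T (Sum.inr (ft, false)) (Sum.inr (ft, true)) :=
      Or.inl (Or.inr (Or.inr (Or.inl ⟨ft, hft, rfl, rfl⟩)))
    by_cases hE : (s(u, v), t) = ft
    · rw [hE]; exact hp
    rcases htf.eq_or_lt with heq | hlt
    · refine .head (Or.inr ⟨_, h, ft, hft, hE, heq, ⟨v, Sym2.mem_mk_right _ _, hv⟩, rfl, rfl⟩)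
        (.head hs hp)
    · refine .head (b := Sum.inl (v, t + 1))
        (Or.inl (Or.inr (Or.inr (Or.inr ⟨_, h, v, Sym2.mem_mk_right _ _, rfl, rfl⟩)))) ?_
      have := hle _ hft
      refine (wait_path v (a := t + 1) (b := ft.2) (by omega) hlt (by omega)).trans
        (.head ?_ (.head hs hp))
      exact Or.inl (Or.inr (Or.inl ⟨ft, hft, v, hv, rfl, rfl⟩))

theorem nonstrict_expansion_correct {V : Type*} [Fintype V] [DecidableEq V]
    (G : Finset (Sym2 V × ℕ)) (T : ℕ)
    (hvalid : ∀ et ∈ G, ¬ et.1.IsDiag ∧ 1 ≤ et.2)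
    (hle : ∀ et ∈ G, et.2 ≤ T)
    (hmax : ∃ et ∈ G, et.2 = T)
    (u v : V) :
    NSJourney G 0 u v ↔
      ∃ X Y : EV V,
        Relation.ReflTransGen (ExpArc' G T) (Sum.inl (u, 1)) X ∧
        SpecialArc G X Y ∧
        Relation.ReflTransGen (ExpArc' G T) Y (Sum.inl (v, T + 1)) := by
  constructor
  · intro h
    obtain ⟨et, het, -, hu, hp⟩ := journey_path hle h
    have h1 := (hvalid et het).2
    have h2 := hle et het
    refine ⟨_, _, ?_, ⟨et, het, rfl, rfl⟩, hp⟩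
    exact (wait_path u le_rfl h1 (by omega)).tail
      (Or.inl (Or.inr (Or.inl ⟨et, het, u, hu, rfl, rfl⟩)))
  · rintro ⟨X, Y, hX, ⟨et, het, rfl, rfl⟩, hY⟩
    have h1 : Good G v True (Sum.inr (et, true)) := good_path hY (Or.inl ⟨trivial, rfl⟩)
    have h2 : Good G v False (Sum.inl (u, 1)) := good_path hX h1
    rcases h2 with h2 | h2
    · exact h2.1.elim
    · exact h2.mono (Nat.zero_le _)

end Stmt14
end

section
/- Let 𝒢 be a temporal graph of lifespan 2 on a nonempty finite vertex set V. Suppose there exists a set F' of at most K temporal edges (with endpoints in V and time labels in {1,2}) such that 𝒢 ↑ F' is temporally connected (with non-strict journeys). Then there exists a set F'' of at most K temporal edges such that 𝒢 ↑ F'' is temporally connected and for every snapshot component C^1 of 𝒢 ↑ F'' at time 1 and every snapshot component C^2 of 𝒢 ↑ F'' at time 2, C^1 ∩ C^2 ≠ ∅; equivalently, augmenting 𝒢 by at most K temporal edges to achieve temporal connectivity is possible if and only if the snapshot components of 𝒢 at times 1 and 2 can be merged, by at most K merge operations each uniting two current components at time 1 or two current components at time 2, into families in which every time-1 component intersects every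 time-2 component. -/
/-!
STATEMENT 15: For a temporal graph `𝒢` of lifespan 2 on a nonempty finite vertex set:
if `𝒢` can be augmented by at most `K` temporal edges (time labels in {1,2}) so as to
become temporally connected, then it can be done so that, in the augmented graph, every
snapshot component at time 1 intersects every snapshot component at time 2.
Equivalently, such an augmentation by at most `K` temporal edges exists iff the
snapshot components of `𝒢` at times 1 and 2 can be merged, by at most `K` merge
operations (each uniting two current components at time 1 or two current components at
time 2), into families in which every time-1 group intersects every time-2 group.  The
merging is encoded by grouping maps `f` and `g` whose fibres over their ranges are the
groups; the number of merge operations is `(k₁ − #time-1 groups) + (k₂ − #time-2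
groups)`.
-/

namespace Stmt15

/-- Non-strict journeys using temporal edges of `G`, all at times `≥ t₀`,
with nondecreasing time labels (at least one temporal edge is used). -/
inductive NSJourney {V : Type*} (G : Finset (Sym2 V × ℕ)) : ℕ → V → V → Prop
  | single {t₀ t : ℕ} {u v : V} (hle : t₀ ≤ t) (h : (s(u, v), t) ∈ G) : NSJourney G t₀ u v
  | cons {t₀ t : ℕ} {u v w : V} (hle : t₀ ≤ t) (h : (s(u, v), t) ∈ G)
      (htail : NSJourney G t v w) : NSJourney G t₀ u w

def TemporallyConnected {V : Type*} (G : Finset (Sym2 V × ℕ)) : Prop :=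
  ∀ u v : V, u ≠ v → NSJourney G 0 u v

/-- The snapshot of a temporal graph at time `t`; its connected components are the
snapshot components at time `t`. -/
def snapshot {V : Type*} (G : Finset (Sym2 V × ℕ)) (t : ℕ) : SimpleGraph V :=
  SimpleGraph.fromEdgeSet {e | (e, t) ∈ G}

theorem nsj_mono {V : Type*} {G : Finset (Sym2 V × ℕ)} {a b : ℕ} {u v : V} (hab : a ≤ b)
    (h : NSJourney G b u v) : NSJourney G a u v := by
  cases h with
  | single hle h => exact .single (hab.trans hle) h
  | cons hle h ht => exact .cons (hab.trans hle) h ht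

theorem nsj_extend {V : Type*} {G : Finset (Sym2 V × ℕ)} {t : ℕ} {u z v : V}
    (hr : (snapshot G t).Reachable u z) (h : z = v ∨ NSJourney G t z v) :
    u = v ∨ NSJourney G t u v := by
  obtain ⟨w⟩ := hr
  induction w with
  | nil => exact h
  | cons hadj w ih =>
    right
    have hm := ((SimpleGraph.fromEdgeSet_adj _).1 hadj).1
    rcases ih h with rfl | h'
    · exact .single le_rfl hm
    · exact .cons le_rfl hm h'

theorem reach_of_mem {V : Type*} {G : Finset (Sym2 V × ℕ)} {t : ℕ} {u v : V}
    (h : (s(u, v), t) ∈ G) : (snapshot G t).Reachable u v := by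
  by_cases huv : u = v
  · subst huv; rfl
  · exact SimpleGraph.Adj.reachable ((SimpleGraph.fromEdgeSet_adj _).2 ⟨h, huv⟩)

theorem nsj_split {V : Type*} {G : Finset (Sym2 V × ℕ)}
    (hG : ∀ et ∈ G, ¬ et.1.IsDiag ∧ (et.2 = 1 ∨ et.2 = 2)) {t : ℕ} {u v : V}
    (h : NSJourney G t u v) :
    (∃ z, (snapshot G 1).Reachable u z ∧ (snapshot G 2).Reachable z v) ∧
      (2 ≤ t → (snapshot G 2).Reachable u v) := by
  induction h with
  | @single t₀ t u v hle h =>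
    have hr := reach_of_mem h
    rcases (hG _ h).2 with h1 | h1 <;> simp only at h1 <;> subst h1
    · exact ⟨⟨v, hr, .rfl⟩, fun h2 => by omega⟩
    · exact ⟨⟨u, .rfl, hr⟩, fun _ => hr⟩
  | @cons t₀ t u v w hle h ht ih =>
    have hr := reach_of_mem h
    rcases (hG _ h).2 with h1 | h1 <;> simp only at h1 <;> subst h1
    · obtain ⟨⟨z, hz1, hz2⟩, -⟩ := ih
      exact ⟨⟨z, hr.trans hz1, hz2⟩, fun h2 => by omega⟩
    · have := hr.trans (ih.2 le_rfl)
      exact ⟨⟨u, .rfl, this⟩, fun _ => this⟩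

theorem tc_iff {V : Type*} {G : Finset (Sym2 V × ℕ)}
    (hG : ∀ et ∈ G, ¬ et.1.IsDiag ∧ (et.2 = 1 ∨ et.2 = 2)) :
    TemporallyConnected G ↔
      ∀ u v : V, ∃ z : V, (snapshot G 1).Reachable u z ∧ (snapshot G 2).Reachable v z := by
  constructor
  · intro h u v
    by_cases huv : u = v
    · subst huv; exact ⟨u, .rfl, .rfl⟩
    · obtain ⟨⟨z, h1, h2⟩, -⟩ := nsj_split hG (h u v huv)
      exact ⟨z, h1, h2.symm⟩
  · intro h u v huv
    obtain ⟨z, h1, h2⟩ := h u v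
    have a := nsj_extend h2.symm (Or.inl rfl)
    have b := nsj_extend h1 (a.imp_right (nsj_mono (by norm_num)))
    exact nsj_mono (by norm_num) (b.resolve_left huv)

theorem reach_sup_edge {V : Type*} (G : SimpleGraph V) (u v : V) {a b : V}
    (h : (G ⊔ SimpleGraph.fromEdgeSet {s(u, v)}).Reachable a b) :
    G.Reachable a b ∨ ((G.Reachable a u ∨ G.Reachable a v) ∧
      (G.Reachable b u ∨ G.Reachable b v)) := by
  obtain ⟨w⟩ := h
  induction w with
  | nil => exact .inl .rfl
  | @cons x y z hadj w ih =>
    rcases hadj with hadj | hadj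
    · have hxy : G.Reachable x y := SimpleGraph.Adj.reachable hadj
      rcases ih with h | ⟨h, h'⟩
      · exact .inl (hxy.trans h)
      · exact .inr ⟨h.imp hxy.trans hxy.trans, h'⟩
    · have := ((SimpleGraph.fromEdgeSet_adj _).1 hadj).1
      simp only [Set.mem_singleton_iff, Sym2.eq_iff] at this
      rcases this with ⟨rfl, rfl⟩ | ⟨rfl, rfl⟩
      · rcases ih with h | ⟨h, h'⟩
        · exact .inr ⟨.inl .rfl, .inr h.symm⟩
        · exact .inr ⟨.inl .rfl, h'⟩
      · rcases ih with h | ⟨h, h'⟩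
        · exact .inr ⟨.inr .rfl, .inl h.symm⟩
        · exact .inr ⟨.inr .rfl, h'⟩

theorem card_sup_edge {V : Type*} [Finite V] (G : SimpleGraph V) (e : Sym2 V) :
    Nat.card G.ConnectedComponent ≤
      Nat.card (G ⊔ SimpleGraph.fromEdgeSet {e}).ConnectedComponent + 1 := by
  induction e using Sym2.ind with
  | _ u v =>
  classical
  have key : Function.Injective (fun c : G.ConnectedComponent =>
      if c = G.connectedComponentMk u then none
      else some (c.map (SimpleGraph.Hom.ofLE
        (le_sup_left : G ≤ G ⊔ SimpleGraph.fromEdgeSet {s(u, v)})))) := by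
    intro c d hcd
    induction c using SimpleGraph.ConnectedComponent.ind with | _ a =>
    induction d using SimpleGraph.ConnectedComponent.ind with | _ b =>
    simp only at hcd
    split_ifs at hcd with h1 h2 h2
    · rw [h1, h2]
    · rw [Option.some_inj, SimpleGraph.ConnectedComponent.map_mk,
        SimpleGraph.ConnectedComponent.map_mk, SimpleGraph.ConnectedComponent.eq] at hcd
      rw [SimpleGraph.ConnectedComponent.eq] at h1 h2 ⊢
      rcases reach_sup_edge G u v hcd with h | ⟨h, h'⟩
      · exact h
      · exact (h.resolve_left h1).trans (h'.resolve_left h2).symm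
  have := Nat.card_le_card_of_injective _ key
  rwa [Finite.card_option] at this

theorem card_sup_edges {V : Type*} [Finite V] [DecidableEq V] (E : Finset (Sym2 V)) :
    ∀ G : SimpleGraph V, Nat.card G.ConnectedComponent ≤
      Nat.card (G ⊔ SimpleGraph.fromEdgeSet (E : Set (Sym2 V))).ConnectedComponent + E.card := by
  induction E using Finset.induction_on with
  | empty => intro G; simp
  | insert e E he ih =>
    intro G
    have h1 := card_sup_edge G e
    have h2 := ih (G ⊔ SimpleGraph.fromEdgeSet {e})
    rw [sup_assoc, ← SimpleGraph.fromEdgeSet_union, ← Set.insert_eq, ← Finset.coe_insert] at h2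
    rw [Finset.card_insert_of_notMem he]
    omega

theorem snapshot_union {V : Type*} [DecidableEq V] (G F : Finset (Sym2 V × ℕ)) (t : ℕ) :
    snapshot (G ∪ F) t = snapshot G t ⊔ SimpleGraph.fromEdgeSet
      (((F.filter (fun et => et.2 = t)).image Prod.fst : Finset (Sym2 V)) : Set (Sym2 V)) := by
  unfold snapshot
  rw [← SimpleGraph.fromEdgeSet_union]
  congr 1
  ext e
  simp

theorem card_snapshot {V : Type*} [Finite V] [DecidableEq V] (G F : Finset (Sym2 V × ℕ)) (t : ℕ) :
    Nat.card (snapshot G t).ConnectedComponent ≤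
      Nat.card (snapshot (G ∪ F) t).ConnectedComponent +
        (F.filter (fun et => et.2 = t)).card := by
  rw [snapshot_union]
  exact (card_sup_edges _ _).trans (Nat.add_le_add_left Finset.card_image_le _)

theorem snapshot_le {V : Type*} [DecidableEq V] (G F : Finset (Sym2 V × ℕ)) (t : ℕ) :
    snapshot G t ≤ snapshot (G ∪ F) t := by
  rw [snapshot_union]; exact le_sup_left

/-- grouping map from a larger graph -/
theorem exists_group {V : Type*} [Finite V] {G H : SimpleGraph V} (hle : G ≤ H) :
    ∃ f : G.ConnectedComponent → G.ConnectedComponent,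
      Nat.card (Set.range f) = Nat.card H.ConnectedComponent ∧
      ∀ a b : V, H.Reachable a b →
        f (G.connectedComponentMk a) = f (G.connectedComponentMk b) := by
  classical
  let m : G.ConnectedComponent → H.ConnectedComponent :=
    fun c => c.map (SimpleGraph.Hom.ofLE hle)
  have hm : Function.Surjective m := by
    intro d
    induction d using SimpleGraph.ConnectedComponent.ind with | _ b =>
    exact ⟨G.connectedComponentMk b, rfl⟩
  refine ⟨fun c => Function.surjInv hm (m c), ?_, ?_⟩
  · have : Set.range (fun c => Function.surjInv hm (m c)) = Set.range (Function.surjInv hm) :=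
      hm.range_comp (Function.surjInv hm)
    rw [this]
    exact Nat.card_range_of_injective (Function.injective_surjInv hm)
  · intro a b hab
    have : m (G.connectedComponentMk a) = m (G.connectedComponentMk b) :=
      SimpleGraph.ConnectedComponent.eq.2 hab
    simp only [this]

/-- edges realizing a grouping map -/
theorem exists_edges {V : Type*} [Finite V] [DecidableEq V] (G : SimpleGraph V)
    (f : G.ConnectedComponent → G.ConnectedComponent) :
    ∃ E : Finset (Sym2 V), E.card ≤ Nat.card G.ConnectedComponent - Nat.card (Set.range f) ∧
      (∀ e ∈ E, ¬ e.IsDiag) ∧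
      ∀ a b : V, f (G.connectedComponentMk a) = f (G.connectedComponentMk b) →
        (G ⊔ SimpleGraph.fromEdgeSet (E : Set (Sym2 V))).Reachable a b := by
  classical
  have := Fintype.ofFinite G.ConnectedComponent
  let σ : Set.range f → G.ConnectedComponent := Function.surjInv Set.rangeFactorization_surjective
  have hσ : Function.Injective σ := Function.injective_surjInv _
  have hσf : ∀ x, f (σ x) = x := fun x =>
    congrArg Subtype.val (Function.surjInv_eq Set.rangeFactorization_surjective x)
  let ρ : G.ConnectedComponent → G.ConnectedComponent := fun c => σ ⟨f c, c, rfl⟩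
  let o : G.ConnectedComponent → V := fun c => c.out
  have ho : ∀ c, G.connectedComponentMk (o c) = c := fun c => Quot.out_eq c
  let S : Finset G.ConnectedComponent := Finset.univ \ Finset.univ.image σ
  let E := S.image (fun c => s(o c, o (ρ c)))
  have hle : G ≤ G ⊔ SimpleGraph.fromEdgeSet (E : Set (Sym2 V)) := le_sup_left
  have step : ∀ c, (G ⊔ SimpleGraph.fromEdgeSet (E : Set (Sym2 V))).Reachable (o c) (o (ρ c)) := by
    intro c
    by_cases hc : c ∈ S
    · by_cases h : o c = o (ρ c)
      · rw [← h]
      · refine SimpleGraph.Adj.reachable (Or.inr ((SimpleGraph.fromEdgeSet_adj _).2 ⟨?_, h⟩))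
        exact Finset.mem_coe.2 (Finset.mem_image_of_mem _ hc)
    · have : ∃ x, σ x = c := by
        by_contra hx
        apply hc
        simp only [S, Finset.mem_sdiff, Finset.mem_image, Finset.mem_univ, true_and]
        exact hx
      obtain ⟨x, rfl⟩ := this
      have : ρ (σ x) = σ x := congrArg σ (Subtype.ext (hσf x))
      rw [this]
  have toO : ∀ a, (G ⊔ SimpleGraph.fromEdgeSet (E : Set (Sym2 V))).Reachable a
      (o (G.connectedComponentMk a)) := fun a =>
    (SimpleGraph.ConnectedComponent.eq.1 (ho (G.connectedComponentMk a))).symm.mono hle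
  refine ⟨E, ?_, ?_, ?_⟩
  · refine Finset.card_image_le.trans ?_
    rw [Finset.card_sdiff_of_subset (Finset.subset_univ _), Finset.card_image_of_injective _ hσ,
      Finset.card_univ, Finset.card_univ, Nat.card_eq_fintype_card, Nat.card_eq_fintype_card]
  · intro e he
    obtain ⟨c, hc, rfl⟩ := Finset.mem_image.1 he
    intro hd
    have h : o c = o (ρ c) := hd
    have : c = ρ c := (ho c).symm.trans ((congrArg _ h).trans (ho _))
    simp only [S, Finset.mem_sdiff, Finset.mem_image, Finset.mem_univ, true_and] at hc
    exact hc ⟨_, this.symm⟩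
  · intro a b hab
    have : ρ (G.connectedComponentMk a) = ρ (G.connectedComponentMk b) :=
      congrArg σ (Subtype.ext hab)
    have h1 := (toO a).trans (step _)
    rw [this] at h1
    exact h1.trans ((toO b).trans (step _)).symm

theorem augmentation_normalization_and_merging {V : Type*} [Fintype V] [DecidableEq V]
    [Nonempty V] (𝒢 : Finset (Sym2 V × ℕ))
    (hvalid : ∀ et ∈ 𝒢, ¬ et.1.IsDiag ∧ (et.2 = 1 ∨ et.2 = 2))
    (hmax : ∃ et ∈ 𝒢, et.2 = 2)
    (K : ℕ) (hK : 1 ≤ K) :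
    -- if an augmentation by ≤ K temporal edges yields temporal connectivity, then one
    -- exists in which every time-1 component meets every time-2 component
    ((∃ F' : Finset (Sym2 V × ℕ), F'.card ≤ K ∧
        (∀ et ∈ F', ¬ et.1.IsDiag ∧ (et.2 = 1 ∨ et.2 = 2)) ∧
        TemporallyConnected (𝒢 ∪ F')) →
      ∃ F'' : Finset (Sym2 V × ℕ), F''.card ≤ K ∧
        (∀ et ∈ F'', ¬ et.1.IsDiag ∧ (et.2 = 1 ∨ et.2 = 2)) ∧
        TemporallyConnected (𝒢 ∪ F'') ∧
        ∀ u v : V, ∃ z : V,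
          (snapshot (𝒢 ∪ F'') 1).Reachable u z ∧ (snapshot (𝒢 ∪ F'') 2).Reachable v z) ∧
    -- equivalently: an augmentation by ≤ K temporal edges yields temporal connectivity
    -- iff at most K merge operations make every time-1 group meet every time-2 group
    ((∃ F' : Finset (Sym2 V × ℕ), F'.card ≤ K ∧
        (∀ et ∈ F', ¬ et.1.IsDiag ∧ (et.2 = 1 ∨ et.2 = 2)) ∧
        TemporallyConnected (𝒢 ∪ F')) ↔
      (∃ (f : (snapshot 𝒢 1).ConnectedComponent → (snapshot 𝒢 1).ConnectedComponent)
         (g : (snapshot 𝒢 2).ConnectedComponent → (snapshot 𝒢 2).ConnectedComponent),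
        (Nat.card ((snapshot 𝒢 1).ConnectedComponent) - Nat.card (Set.range f)) +
            (Nat.card ((snapshot 𝒢 2).ConnectedComponent) - Nat.card (Set.range g)) ≤ K ∧
        ∀ r ∈ Set.range f, ∀ c ∈ Set.range g,
          ∃ (r' : (snapshot 𝒢 1).ConnectedComponent)
            (c' : (snapshot 𝒢 2).ConnectedComponent) (v : V),
            f r' = r ∧ g c' = c ∧
            (snapshot 𝒢 1).connectedComponentMk v = r' ∧
            (snapshot 𝒢 2).connectedComponentMk v = c')) := by
  have hval : ∀ F : Finset (Sym2 V × ℕ), (∀ et ∈ F, ¬ et.1.IsDiag ∧ (et.2 = 1 ∨ et.2 = 2)) →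
      ∀ et ∈ 𝒢 ∪ F, ¬ et.1.IsDiag ∧ (et.2 = 1 ∨ et.2 = 2) := by
    intro F hF et het
    rcases Finset.mem_union.1 het with h | h
    · exact hvalid et h
    · exact hF et h
  refine ⟨?_, ?_, ?_⟩
  · rintro ⟨F, hc, hF, htc⟩
    exact ⟨F, hc, hF, htc, (tc_iff (hval F hF)).1 htc⟩
  · rintro ⟨F, hc, hF, htc⟩
    have htc := (tc_iff (hval F hF)).1 htc
    obtain ⟨f, hf1, hf2⟩ := exists_group (snapshot_le 𝒢 F 1)
    obtain ⟨g, hg1, hg2⟩ := exists_group (snapshot_le 𝒢 F 2)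
    refine ⟨f, g, ?_, ?_⟩
    · have h1 := card_snapshot 𝒢 F 1
      have h2 := card_snapshot 𝒢 F 2
      have h3 : (F.filter (fun et => et.2 = 1)).card + (F.filter (fun et => et.2 = 2)).card
          ≤ F.card := by
        rw [← Finset.card_union_of_disjoint]
        · exact Finset.card_le_card (Finset.union_subset (Finset.filter_subset _ _)
            (Finset.filter_subset _ _))
        · refine Finset.disjoint_filter.2 ?_
          intro x _ h h'
          omega
      rw [hf1, hg1]
      omega
    · rintro _ ⟨r, rfl⟩ _ ⟨c, rfl⟩
      induction r using SimpleGraph.ConnectedComponent.ind with | _ a =>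
      induction c using SimpleGraph.ConnectedComponent.ind with | _ b =>
      obtain ⟨z, h1, h2⟩ := htc a b
      exact ⟨_, _, z, (hf2 _ _ h1).symm, (hg2 _ _ h2).symm, rfl, rfl⟩
  · rintro ⟨f, g, hc, hfg⟩
    obtain ⟨E, hE1, hE2, hE3⟩ := exists_edges _ f
    obtain ⟨D, hD1, hD2, hD3⟩ := exists_edges _ g
    let F : Finset (Sym2 V × ℕ) := E.image (fun e => (e, 1)) ∪ D.image (fun e => (e, 2))
    have hF : ∀ et ∈ F, ¬ et.1.IsDiag ∧ (et.2 = 1 ∨ et.2 = 2) := by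
      intro et het
      rcases Finset.mem_union.1 het with h | h
      · obtain ⟨e, he, rfl⟩ := Finset.mem_image.1 h
        exact ⟨hE2 e he, .inl rfl⟩
      · obtain ⟨e, he, rfl⟩ := Finset.mem_image.1 h
        exact ⟨hD2 e he, .inr rfl⟩
    have hs1 : snapshot (𝒢 ∪ F) 1 =
        snapshot 𝒢 1 ⊔ SimpleGraph.fromEdgeSet (E : Set (Sym2 V)) := by
      rw [snapshot_union]
      congr 2
      ext e
      simp [F]
    have hs2 : snapshot (𝒢 ∪ F) 2 =
        snapshot 𝒢 2 ⊔ SimpleGraph.fromEdgeSet (D : Set (Sym2 V)) := by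
      rw [snapshot_union]
      congr 2
      ext e
      simp [F]
    refine ⟨F, ?_, hF, (tc_iff (hval F hF)).2 ?_⟩
    · have h1 : F.card ≤ _ := Finset.card_union_le _ _
      have h2 : (E.image (fun e => (e, 1))).card ≤ E.card := Finset.card_image_le
      have h3 : (D.image (fun e => (e, 2))).card ≤ D.card := Finset.card_image_le
      omega
    · intro u v
      rw [hs1, hs2]
      obtain ⟨r', c', z, h1, h2, rfl, rfl⟩ :=
        hfg _ ⟨(snapshot 𝒢 1).connectedComponentMk u, rfl⟩
          _ ⟨(snapshot 𝒢 2).connectedComponentMk v, rfl⟩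
      exact ⟨z, hE3 _ _ h1.symm, hD3 _ _ h2.symm⟩

end Stmt15
end
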